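/- arXiv:0712.1093 — 2 statements merged into one kernel-verified Lean document; each statement's English description precedes it below -/
import Mathlib

section
/- For every real number ν, every t > 0 and every a > 0, P[ A_t^{(ν)} ≤ a ] = a^{2ν} · e^{-2/a} · E[ (a + A_t^{(ν)})^{-2ν} · exp( 2·exp(B_t + (ν − 1/2)·t) / (a + A_t^{(ν)}) ) ]. -/
open MeasureTheory ProbabilityTheory Real Set

noncomputable section

/-- A standard one-dimensional Brownian motion `B` (with `B 0 = 0`, continuous
paths, Gaussian increments and independent increments) on a probability space
with measure `P`. -/
structure IsBrownianMotion {Ω : Type*} [MeasurableSpace Ω]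
    (P : Measure Ω) (B : ℝ → Ω → ℝ) : Prop where
  isProbabilityMeasure : IsProbabilityMeasure P
  measurable : ∀ t : ℝ, Measurable (B t)
  start : ∀ ω, B 0 ω = 0
  continuous_paths : ∀ ω, Continuous fun t => B t ω
  gaussian_increments : ∀ s t : ℝ, 0 ≤ s → s ≤ t →
    P.map (fun ω => B t ω - B s ω) = gaussianReal 0 (Real.toNNReal (t - s))
  indep_increments : ∀ t : ℕ → ℝ, Monotone t → 0 ≤ t 0 →
    iIndepFun
      (fun (i : ℕ) (ω : Ω) => B (t (i + 1)) ω - B (t i) ω) P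

/-- The exponential martingale `M_t = exp (B_t - t/2)`. -/
def M {Ω : Type*} (B : ℝ → Ω → ℝ) (t : ℝ) (ω : Ω) : ℝ :=
  Real.exp (B t ω - t / 2)

/-- The time integral `A_t = ∫_0^t exp (B_s - s/2) ds`. -/
def A {Ω : Type*} (B : ℝ → Ω → ℝ) (t : ℝ) (ω : Ω) : ℝ :=
  ∫ s in (0 : ℝ)..t, Real.exp (B s ω - s / 2)

/-- The time integral with drift `ν`: `A_t^{(ν)} = ∫_0^t exp (B_s + (ν - 1/2) s) ds`. -/
def Adrift {Ω : Type*} (B : ℝ → Ω → ℝ) (ν t : ℝ) (ω : Ω) : ℝ :=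
  ∫ s in (0 : ℝ)..t, Real.exp (B s ω + (ν - 1 / 2) * s)


open Filter Topology
open scoped ENNReal NNReal

/-- log-density of the affine change of variables `x ↦ exp(-s/2) x - s`. -/
def ellStep (h s x : ℝ) : ℝ :=
  x ^ 2 * (1 - Real.exp (-s)) / (2 * h) + Real.exp (-s / 2) * s * x / h - s ^ 2 / (2 * h) - s / 2

lemma gauss_step (h : ℝ) (hh : 0 < h) (s : ℝ) (φ : ℝ → ℝ≥0∞) (hφ : Measurable φ) :
    ∫⁻ x, φ (Real.exp (-s / 2) * x - s) * ENNReal.ofReal (Real.exp (ellStep h s x))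
      ∂(gaussianReal 0 h.toNNReal) = ∫⁻ x, φ x ∂(gaussianReal 0 h.toNNReal) := by
  have hv : h.toNNReal ≠ 0 := by simpa using hh
  have hcoe : (h.toNNReal : ℝ) = h := Real.coe_toNNReal _ hh.le
  rw [gaussianReal_of_var_ne_zero _ hv,
    lintegral_withDensity_eq_lintegral_mul _ (measurable_gaussianPDF _ _) (by
      unfold ellStep; fun_prop),
    lintegral_withDensity_eq_lintegral_mul _ (measurable_gaussianPDF _ _) hφ]
  have key := lintegral_image_eq_lintegral_abs_deriv_mul (s := Set.univ)
    (f := fun x : ℝ => Real.exp (-s / 2) * x - s) (f' := fun _ => Real.exp (-s / 2))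
    MeasurableSet.univ
    (fun x _ => by
      simpa using (((hasDerivAt_id x).const_mul (Real.exp (-s / 2))).sub_const s))
    (fun x _ y _ hxy => by
      have : Real.exp (-s / 2) * x = Real.exp (-s / 2) * y := by
        simpa using hxy
      exact mul_left_cancel₀ (Real.exp_pos _).ne' this)
    (fun x => gaussianPDF 0 h.toNNReal x * φ x)
  have himg : Set.image (fun x : ℝ => Real.exp (-s / 2) * x - s) Set.univ = Set.univ := by
    ext y
    simp only [Set.image_univ, Set.mem_range, Set.mem_univ, iff_true]
    refine ⟨(y + s) / Real.exp (-s / 2), ?_⟩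
    have := (Real.exp_pos (-s / 2)).ne'
    field_simp
    ring
  rw [himg, Measure.restrict_univ] at key
  simp only [Pi.mul_apply]
  rw [key]
  refine lintegral_congr fun x => ?_
  have e1 : gaussianPDF 0 h.toNNReal x * ENNReal.ofReal (Real.exp (ellStep h s x))
      = ENNReal.ofReal |Real.exp (-s / 2)| *
        gaussianPDF 0 h.toNNReal (Real.exp (-s / 2) * x - s) := by
    unfold gaussianPDF
    rw [← ENNReal.ofReal_mul (gaussianPDFReal_nonneg _ _ _), ← ENNReal.ofReal_mul (abs_nonneg _)]
    congr 1
    rw [abs_of_pos (Real.exp_pos _)]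
    simp only [gaussianPDFReal, hcoe]
    rw [mul_assoc, ← Real.exp_add, mul_left_comm, ← Real.exp_add]
    congr 2
    have e2 : Real.exp (-s) = Real.exp (-s / 2) ^ 2 := by
      rw [← Real.exp_nat_mul]; congr 1; push_cast; ring
    unfold ellStep
    rw [e2]
    field_simp
    ring
  calc _ = gaussianPDF 0 h.toNNReal x * ENNReal.ofReal (Real.exp (ellStep h s x))
        * φ (Real.exp (-s / 2) * x - s) := by ring
    _ = _ := by rw [e1]; ring

def dZ (μ h : ℝ) (x : ℕ → ℝ) (k : ℕ) : ℝ := ∑ j ∈ Finset.range k, (x j + μ * h)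

def dA (μ h : ℝ) (x : ℕ → ℝ) (k : ℕ) : ℝ := ∑ j ∈ Finset.range k, h * Real.exp (dZ μ h x j)

def dS (c μ h : ℝ) (x : ℕ → ℝ) (k : ℕ) : ℝ :=
  2 * Real.log (1 + h * c * Real.exp (dZ μ h x k) / (1 + c * dA μ h x k))

def dZp (c μ h : ℝ) (x : ℕ → ℝ) (k : ℕ) : ℝ :=
  ∑ j ∈ Finset.range k, (μ * h + (Real.exp (-dS c μ h x j / 2) * x j - dS c μ h x j))

def dAp (c μ h : ℝ) (x : ℕ → ℝ) (k : ℕ) : ℝ := ∑ j ∈ Finset.range k, h * Real.exp (dZp c μ h x j)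

def dL (c μ h : ℝ) (x : ℕ → ℝ) (k : ℕ) : ℝ :=
  ∑ j ∈ Finset.range k, ellStep h (dS c μ h x j) (x j)

lemma dS_zero (μ h : ℝ) (x : ℕ → ℝ) (k : ℕ) : dS 0 μ h x k = 0 := by simp [dS]

lemma dZp_zero (μ h : ℝ) (x : ℕ → ℝ) (k : ℕ) : dZp 0 μ h x k = dZ μ h x k := by
  simp [dZp, dZ, dS_zero, add_comm]

lemma dAp_zero (μ h : ℝ) (x : ℕ → ℝ) (k : ℕ) : dAp 0 μ h x k = dA μ h x k := by
  simp [dAp, dA, dZp_zero]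

lemma dL_zero (μ h : ℝ) (x : ℕ → ℝ) (k : ℕ) : dL 0 μ h x k = 0 := by
  simp [dL, dS_zero, ellStep]

lemma meas_ellStep (h : ℝ) : Measurable (fun p : ℝ × ℝ => ellStep h p.1 p.2) := by
  unfold ellStep; fun_prop

section meas
variable {Ω : Type*} (m : MeasurableSpace Ω) (c μ h : ℝ) (ξ : ℕ → Ω → ℝ)

lemma meas_dZ (k : ℕ) (hξ : ∀ j < k, Measurable[m] (ξ j)) :
    Measurable[m] (fun ω => dZ μ h (fun j => ξ j ω) k) := by
  unfold dZ
  refine Finset.measurable_sum _ fun j hj => ?_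
  exact (hξ j (Finset.mem_range.1 hj)).add_const _

lemma meas_dA (k : ℕ) (hξ : ∀ j < k, Measurable[m] (ξ j)) :
    Measurable[m] (fun ω => dA μ h (fun j => ξ j ω) k) := by
  unfold dA
  refine Finset.measurable_sum _ fun j hj => ?_
  have hj' := Finset.mem_range.1 hj
  exact (Real.measurable_exp.comp (meas_dZ m μ h ξ j fun i hi => hξ i (hi.trans hj'))).const_mul _

lemma meas_dS (k : ℕ) (hξ : ∀ j < k, Measurable[m] (ξ j)) :
    Measurable[m] (fun ω => dS c μ h (fun j => ξ j ω) k) := by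
  unfold dS
  have h1 := meas_dZ m μ h ξ k hξ
  have h2 := meas_dA m μ h ξ k hξ
  exact (Real.measurable_log.comp
    ((((Real.measurable_exp.comp h1).const_mul _).div ((h2.const_mul _).const_add _)).const_add _)
    ).const_mul _

lemma meas_dZp (k : ℕ) (hξ : ∀ j < k, Measurable[m] (ξ j)) :
    Measurable[m] (fun ω => dZp c μ h (fun j => ξ j ω) k) := by
  unfold dZp
  refine Finset.measurable_sum _ fun j hj => ?_
  have hj' := Finset.mem_range.1 hj
  have h1 := meas_dS m c μ h ξ j fun i hi => hξ i (hi.trans hj')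
  exact (((Real.measurable_exp.comp (h1.neg.div_const _)).mul (hξ j hj')).sub h1).const_add _

lemma meas_dAp (k : ℕ) (hξ : ∀ j < k, Measurable[m] (ξ j)) :
    Measurable[m] (fun ω => dAp c μ h (fun j => ξ j ω) k) := by
  unfold dAp
  refine Finset.measurable_sum _ fun j hj => ?_
  have hj' := Finset.mem_range.1 hj
  exact (Real.measurable_exp.comp
    (meas_dZp m c μ h ξ j fun i hi => hξ i (hi.trans hj'))).const_mul _

lemma meas_ell_comp {s x : Ω → ℝ} (hs : Measurable[m] s) (hx : Measurable[m] x) :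
    Measurable[m] (fun ω => ellStep h (s ω) (x ω)) := by
  have := (meas_ellStep h).comp (hs.prodMk hx)
  exact this

lemma meas_dL (k : ℕ) (hξ : ∀ j < k, Measurable[m] (ξ j)) :
    Measurable[m] (fun ω => dL c μ h (fun j => ξ j ω) k) := by
  have h0 : ∀ j ∈ Finset.range k,
      Measurable[m] (fun ω => ellStep h (dS c μ h (fun j => ξ j ω) j) (ξ j ω)) := by
    intro j hj
    have hj' := Finset.mem_range.1 hj
    exact meas_ell_comp m h (meas_dS m c μ h ξ j fun i hi => hξ i (hi.trans hj')) (hξ j hj')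
  exact Finset.measurable_sum _ h0

end meas

/-- one-step transition operator -/
def opP (μ h : ℝ) (g : ℝ × ℝ → ℝ≥0∞) (p : ℝ × ℝ) : ℝ≥0∞ :=
  ∫⁻ x, g (p.1 + (μ * h + x), p.2 + h * Real.exp p.1) ∂(gaussianReal 0 h.toNNReal)

lemma meas_opP (μ h : ℝ) (g : ℝ × ℝ → ℝ≥0∞) (hg : Measurable g) : Measurable (opP μ h g) := by
  unfold opP
  refine Measurable.lintegral_prod_right' (f := fun q : (ℝ × ℝ) × ℝ =>
    g (q.1.1 + (μ * h + q.2), q.1.2 + h * Real.exp q.1.1)) ?_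
  fun_prop

section girs
variable {Ω : Type*} [MeasurableSpace Ω] (P : Measure Ω) [IsProbabilityMeasure P]
  (c μ h : ℝ) (ξ : ℕ → Ω → ℝ)

lemma girs_step (hh : 0 < h) (hm : ∀ k, Measurable (ξ k)) (hi : iIndepFun ξ P)
    (k : ℕ) (hlaw : P.map (ξ k) = gaussianReal 0 h.toNNReal)
    (g : ℝ × ℝ → ℝ≥0∞) (hg : Measurable g) :
    ∫⁻ ω, g (dZp c μ h (fun j => ξ j ω) (k + 1), dAp c μ h (fun j => ξ j ω) (k + 1)) *
        ENNReal.ofReal (Real.exp (dL c μ h (fun j => ξ j ω) (k + 1))) ∂P =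
    ∫⁻ ω, opP μ h g (dZp c μ h (fun j => ξ j ω) k, dAp c μ h (fun j => ξ j ω) k) *
        ENNReal.ofReal (Real.exp (dL c μ h (fun j => ξ j ω) k)) ∂P := by
  set U : Ω → ℝ × ℝ × ℝ × ℝ := fun ω => (dZp c μ h (fun j => ξ j ω) k,
    dAp c μ h (fun j => ξ j ω) k, dL c μ h (fun j => ξ j ω) k, dS c μ h (fun j => ξ j ω) k) with hU
  have hind : IndepFun U (ξ k) P := by
    have h0 := indep_iSup_of_disjoint (m := fun i => MeasurableSpace.comap (ξ i) inferInstance)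
      (fun i => (hm i).comap_le) hi.iIndep (S := Set.Iio k) (T := {k}) (by simp)
    rw [IndepFun_iff_Indep]
    have hle : ∀ j < k, Measurable[⨆ i ∈ Set.Iio k, MeasurableSpace.comap (ξ i) inferInstance]
        (ξ j) := by
      intro j hj
      refine Measurable.mono (comap_measurable (ξ j)) ?_ le_rfl
      exact le_iSup₂_of_le j hj le_rfl
    refine indep_of_indep_of_le_left (indep_of_indep_of_le_right h0 (by simp)) ?_
    rw [← measurable_iff_comap_le]
    exact (meas_dZp _ c μ h ξ k hle).prodMk ((meas_dAp _ c μ h ξ k hle).prodMk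
      ((meas_dL _ c μ h ξ k hle).prodMk (meas_dS _ c μ h ξ k hle)))
  have hle : ∀ j < k, Measurable (ξ j) := fun j _ => hm j
  have hUm : Measurable U := (meas_dZp _ c μ h ξ k hle).prodMk ((meas_dAp _ c μ h ξ k hle).prodMk
      ((meas_dL _ c μ h ξ k hle).prodMk (meas_dS _ c μ h ξ k hle)))
  rw [indepFun_iff_map_prod_eq_prod_map_map hUm.aemeasurable (hm k).aemeasurable] at hind
  set G : (ℝ × ℝ × ℝ × ℝ) × ℝ → ℝ≥0∞ := fun q =>
    g (q.1.1 + (μ * h + (Real.exp (-q.1.2.2.2 / 2) * q.2 - q.1.2.2.2)),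
      q.1.2.1 + h * Real.exp q.1.1) *
    ENNReal.ofReal (Real.exp (q.1.2.2.1 + ellStep h q.1.2.2.2 q.2)) with hG
  have hGm : Measurable G := by
    rw [hG]; unfold ellStep; fun_prop
  have e1 : ∀ ω, g (dZp c μ h (fun j => ξ j ω) (k + 1), dAp c μ h (fun j => ξ j ω) (k + 1)) *
        ENNReal.ofReal (Real.exp (dL c μ h (fun j => ξ j ω) (k + 1))) = G (U ω, ξ k ω) := by
    intro ω
    simp only [hG, hU]
    rw [dZp, dAp, dL, Finset.sum_range_succ, Finset.sum_range_succ, Finset.sum_range_succ]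
    rfl
  simp_rw [e1]
  rw [← lintegral_map (f := G) (g := fun ω => (U ω, ξ k ω)) hGm (hUm.prodMk (hm k)), hind,
    lintegral_prod _ hGm.aemeasurable, hlaw, lintegral_map hGm.lintegral_prod_right' hUm]
  refine lintegral_congr fun ω => ?_
  simp only [hG]
  have e2 : ∀ y : ℝ, ENNReal.ofReal (Real.exp ((U ω).2.2.1 + ellStep h (U ω).2.2.2 y)) =
      ENNReal.ofReal (Real.exp (ellStep h (U ω).2.2.2 y)) *
      ENNReal.ofReal (Real.exp (U ω).2.2.1) := by
    intro y
    rw [← ENNReal.ofReal_mul (Real.exp_pos _).le, ← Real.exp_add, add_comm]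
  simp_rw [e2, ← mul_assoc]
  rw [lintegral_mul_const _ (by unfold ellStep; fun_prop)]
  rw [gauss_step h hh (U ω).2.2.2 (fun y => g ((U ω).1 + (μ * h + y),
    (U ω).2.1 + h * Real.exp (U ω).1)) (by fun_prop)]
  rfl

lemma girs (hh : 0 < h) (hm : ∀ k, Measurable (ξ k)) (hi : iIndepFun ξ P)
    (hlaw : ∀ k, P.map (ξ k) = gaussianReal 0 h.toNNReal) (n : ℕ) :
    ∀ (g : ℝ × ℝ → ℝ≥0∞), Measurable g →
    ∫⁻ ω, g (dZp c μ h (fun j => ξ j ω) n, dAp c μ h (fun j => ξ j ω) n) *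
        ENNReal.ofReal (Real.exp (dL c μ h (fun j => ξ j ω) n)) ∂P =
    ((opP μ h)^[n] g) (0, 0) := by
  induction n with
  | zero => intro g _; simp [dZp, dAp, dL]
  | succ n ih =>
    intro g hg
    rw [girs_step P c μ h ξ hh hm hi n (hlaw n) g hg, ih _ (meas_opP μ h g hg),
      Function.iterate_succ_apply]

lemma girs_main (hh : 0 < h) (hm : ∀ k, Measurable (ξ k)) (hi : iIndepFun ξ P)
    (hlaw : ∀ k, P.map (ξ k) = gaussianReal 0 h.toNNReal) (n : ℕ)
    (g : ℝ × ℝ → ℝ≥0∞) (hg : Measurable g) :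
    ∫⁻ ω, g (dZp c μ h (fun j => ξ j ω) n, dAp c μ h (fun j => ξ j ω) n) *
        ENNReal.ofReal (Real.exp (dL c μ h (fun j => ξ j ω) n)) ∂P =
    ∫⁻ ω, g (dZ μ h (fun j => ξ j ω) n, dA μ h (fun j => ξ j ω) n) ∂P := by
  rw [girs P c μ h ξ hh hm hi hlaw n g hg, ← girs P 0 μ h ξ hh hm hi hlaw n g hg]
  simp [dZp_zero, dAp_zero, dL_zero]

end girs

lemma exp_third (u : ℝ) (hu : |u| ≤ 1) : |Real.exp u - 1 - u - u ^ 2 / 2| ≤ |u| ^ 3 := by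
  have h := Real.exp_bound hu (n := 3) (by norm_num)
  simp only [Finset.sum_range_succ, Finset.sum_range_zero, Nat.factorial] at h
  norm_num at h
  have h3 : 0 ≤ |u| ^ 3 := by positivity
  have e : Real.exp u - 1 - u - u ^ 2 / 2 = Real.exp u - (1 + u + u ^ 2 / 2) := by ring
  rw [e]
  linarith

lemma exp_R1 (μ ξ h : ℝ) (hξ : |ξ| ≤ 1 / 2) (hh : 0 < h) (hμ : |μ| * h ≤ 1 / 2) :
    |Real.exp (ξ + μ * h) - 1 - ξ - ξ ^ 2 / 2 - μ * h| ≤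
      (4 + |μ| + μ ^ 2 * 3) * (|ξ| ^ 3 + h * |ξ| + h ^ 2) := by
  have hm : |μ * h| = |μ| * h := by rw [abs_mul, abs_of_pos hh]
  have hu : |ξ + μ * h| ≤ 1 := (abs_add_le _ _).trans (by rw [hm]; linarith)
  have h1 := exp_third _ hu
  have h2 : |ξ + μ * h| ≤ |ξ| + |μ| * h := (abs_add_le _ _).trans (by rw [hm])
  have h3 : |ξ + μ * h| ^ 3 ≤ (|ξ| + |μ| * h) ^ 3 := by gcongr
  have e : Real.exp (ξ + μ * h) - 1 - ξ - ξ ^ 2 / 2 - μ * h =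
    (Real.exp (ξ + μ * h) - 1 - (ξ + μ * h) - (ξ + μ * h) ^ 2 / 2) + (ξ * (μ * h) + (μ * h) ^ 2 / 2) := by ring
  rw [e]
  have h4 : |ξ * (μ * h) + (μ * h) ^ 2 / 2| ≤ |ξ| * (|μ| * h) + (|μ| * h) ^ 2 / 2 := by
    refine (abs_add_le _ _).trans ?_
    rw [abs_mul, hm, abs_div, abs_pow, hm]
    norm_num
  refine (abs_add_le _ _).trans ((add_le_add (h1.trans h3) h4).trans ?_)
  set a := |ξ| with ha
  set b := |μ| with hb
  have hb2 : μ ^ 2 = b ^ 2 := by rw [hb, sq_abs]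
  rw [hb2]
  have ha0 : 0 ≤ a := abs_nonneg _
  have hb0 : 0 ≤ b := abs_nonneg _
  have h5 : (a + b * h) ^ 3 ≤ 4 * (a ^ 3 + (b * h) ^ 3) := by
    have : 0 ≤ b * h := by positivity
    nlinarith [mul_nonneg (add_nonneg ha0 this) (sq_nonneg (a - b * h))]
  have h6 : (b * h) ^ 3 ≤ 1 / 2 * (b * h) ^ 2 := by
    have : 0 ≤ (b * h) ^ 2 := by positivity
    nlinarith
  have : 0 ≤ b * a ^ 3 := by positivity
  have : 0 ≤ b * h ^ 2 := by positivity
  have : 0 ≤ b ^ 2 * a ^ 3 := by positivity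
  have : 0 ≤ b ^ 2 * (h * a) := by positivity
  have : 0 ≤ h * a := by positivity
  have : 0 ≤ h ^ 2 * b ^ 2 := by positivity
  nlinarith

lemma log_quad (w : ℝ) (hw : |w| ≤ 1 / 2) : |Real.log (1 + w) - w| ≤ 2 * w ^ 2 := by
  have hw' := abs_le.1 hw
  have h1 : 0 < 1 + w := by linarith
  rw [abs_le]
  have h2 : Real.log (1 + w) ≤ w := by linarith [Real.log_le_sub_one_of_pos h1]
  have h3 := Real.one_sub_inv_le_log_of_pos h1
  have h4 : (1 + w)⁻¹ ≤ 1 - w + 2 * w ^ 2 := by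
    rw [inv_le_iff_one_le_mul₀ h1]
    nlinarith [sq_nonneg w, mul_nonneg (sq_nonneg w) (show (0 : ℝ) ≤ 1 + 2 * w by linarith)]
  constructor <;> nlinarith [sq_nonneg w]

lemma step_bound (ν μ K h θ ξ q r R : ℝ) (hK : 0 ≤ K) (hh : 0 < h) (hh1 : h ≤ 1)
    (hθ : |θ| ≤ K) (hξ : |ξ| ≤ 1 / 2) (hqabs : |q| ≤ 2) (hrabs : |r| ≤ K ^ 2)
    (hRabs : |R| ≤ (4 + |μ| + μ ^ 2 * 3) * (|ξ| ^ 3 + h * |ξ| + h ^ 2)) :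
    |θ * q * R - h * (ξ * q * r) + h * ξ ^ 2 * (θ ^ 2 * q ^ 2 / 8) + h ^ 2 * (θ ^ 3 * q / 4)
        - h ^ 2 * (θ ^ 2 * μ * q / 2) + h ^ 2 * (-ν * r + θ * r + h * r ^ 2 / 2 + r / 2)| ≤
    (K * 2 * (4 + |μ| + μ ^ 2 * 3) + 2 * K ^ 2 + K ^ 2 + K ^ 3 + K ^ 2 * |μ| +
    (|ν| * K ^ 2 + K ^ 3 + K ^ 4 + K ^ 2)) * (|ξ| ^ 3 + h * |ξ| + h ^ 2) := by
  obtain ⟨E, hE⟩ : ∃ E, E = |ξ| ^ 3 + h * |ξ| + h ^ 2 := ⟨_, rfl⟩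
  rw [← hE] at hRabs ⊢
  have hE1 : h * |ξ| ≤ E := by
    have : 0 ≤ |ξ| ^ 3 := by positivity
    have : 0 ≤ h ^ 2 := by positivity
    linarith
  have hE2 : h ^ 2 ≤ E := by
    have : 0 ≤ |ξ| ^ 3 := by positivity
    have : 0 ≤ h * |ξ| := by positivity
    linarith
  have hE0 : 0 ≤ E := le_trans (by positivity) hE2
  have b1 : |θ * q * R| ≤ K * 2 * (4 + |μ| + μ ^ 2 * 3) * E := by
    rw [abs_mul, abs_mul, mul_assoc (K * 2)]; gcongr
  have b2 : |h * (ξ * q * r)| ≤ 2 * K ^ 2 * E := by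
    rw [abs_mul, abs_mul, abs_mul, abs_of_pos hh]
    calc h * (|ξ| * |q| * |r|) = (|q| * |r|) * (h * |ξ|) := by ring
      _ ≤ 2 * K ^ 2 * E := by gcongr
  have b3 : |h * ξ ^ 2 * (θ ^ 2 * q ^ 2 / 8)| ≤ K ^ 2 * E := by
    rw [abs_mul, abs_mul, abs_div, abs_mul, abs_pow, abs_pow, abs_pow, abs_of_pos hh]
    calc h * |ξ| ^ 2 * (|θ| ^ 2 * |q| ^ 2 / |8|) = (|θ| ^ 2 * |q| ^ 2 / 8 * |ξ|) * (h * |ξ|) := by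
          rw [show |(8 : ℝ)| = 8 by norm_num]; ring
      _ ≤ (K ^ 2 * 2 ^ 2 / 8 * (1 / 2)) * E := by gcongr
      _ ≤ K ^ 2 * E := by
          have : 0 ≤ K ^ 2 * E := by positivity
          linarith
  have b4 : |h ^ 2 * (θ ^ 3 * q / 4)| ≤ K ^ 3 * E := by
    rw [abs_mul, abs_div, abs_mul, abs_pow, abs_pow, abs_of_pos hh]
    calc h ^ 2 * (|θ| ^ 3 * |q| / |4|) = (|θ| ^ 3 * |q| / 4) * h ^ 2 := by
          rw [show |(4 : ℝ)| = 4 by norm_num]; ring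
      _ ≤ (K ^ 3 * 2 / 4) * E := by gcongr
      _ ≤ K ^ 3 * E := by
          have : 0 ≤ K ^ 3 * E := by positivity
          linarith
  have b5 : |h ^ 2 * (θ ^ 2 * μ * q / 2)| ≤ K ^ 2 * |μ| * E := by
    rw [abs_mul, abs_div, abs_mul, abs_mul, abs_pow, abs_pow, abs_of_pos hh, abs_two]
    calc h ^ 2 * (|θ| ^ 2 * |μ| * |q| / 2) = (|θ| ^ 2 * |μ| * |q| / 2) * h ^ 2 := by ring
      _ ≤ (K ^ 2 * |μ| * 2 / 2) * E := by gcongr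
      _ = K ^ 2 * |μ| * E := by ring
  have b6 : |h ^ 2 * (-ν * r + θ * r + h * r ^ 2 / 2 + r / 2)| ≤
      (|ν| * K ^ 2 + K ^ 3 + K ^ 4 + K ^ 2) * E := by
    have c1 : |-ν * r + θ * r + h * r ^ 2 / 2 + r / 2| ≤ |ν| * K ^ 2 + K ^ 3 + K ^ 4 + K ^ 2 := by
      have d1 : |-ν * r| ≤ |ν| * K ^ 2 := by rw [abs_mul, abs_neg]; gcongr
      have d2 : |θ * r| ≤ K ^ 3 := by
        rw [abs_mul]; calc |θ| * |r| ≤ K * K ^ 2 := by gcongr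
          _ = K ^ 3 := by ring
      have d3 : |h * r ^ 2 / 2| ≤ K ^ 4 := by
        rw [abs_div, abs_mul, abs_pow, abs_of_pos hh, abs_two]
        calc h * |r| ^ 2 / 2 ≤ 1 * (K ^ 2) ^ 2 / 2 := by gcongr
          _ ≤ K ^ 4 := by
            have : 0 ≤ K ^ 4 := by positivity
            linarith
      have d4 : |r / 2| ≤ K ^ 2 := by
        rw [abs_div, abs_two]
        have : 0 ≤ |r| := abs_nonneg _
        linarith
      refine (abs_add_le _ _).trans (add_le_add ((abs_add_le _ _).trans (add_le_add
        ((abs_add_le _ _).trans (add_le_add d1 d2)) d3)) d4)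
    rw [abs_mul, abs_of_nonneg (by positivity : (0 : ℝ) ≤ h ^ 2), mul_comm]
    gcongr
  have tri : ∀ a b c d e f : ℝ, |a - b + c + d - e + f| ≤ |a| + |b| + |c| + |d| + |e| + |f| := by
    intro a b c d e f
    have := abs_add_le (a - b + c + d - e) f
    have := abs_sub (a - b + c + d) e
    have := abs_add_le (a - b + c) d
    have := abs_add_le (a - b) c
    have := abs_sub a b
    linarith
  refine (tri _ _ _ _ _ _).trans ?_
  linarith

/-- one-step error estimate -/
lemma step_err (ν K : ℝ) (hK : 0 ≤ K) : ∃ C : ℝ, 0 ≤ C ∧ ∀ h θ ξ : ℝ, 0 < h → h ≤ 1 → K * h ≤ 1 →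
    |ν - 1 / 2| * h ≤ 1 / 2 → |θ| ≤ K → |ξ| ≤ 1 / 2 →
    |(θ * Real.exp (ξ + (ν - 1 / 2) * h) / (1 + h * θ / 2) - θ
        - ν * (2 * Real.log (1 + h * θ / 2)))
      - ellStep h (2 * Real.log (1 + h * θ / 2)) ξ| ≤ C * (|ξ| ^ 3 + h * |ξ| + h ^ 2) := by
  set μ := ν - 1 / 2 with hμ
  refine ⟨K * 2 * (4 + |μ| + μ ^ 2 * 3) + 2 * K ^ 2 + K ^ 2 + K ^ 3 + K ^ 2 * |μ| +
    (|ν| * K ^ 2 + K ^ 3 + K ^ 4 + K ^ 2), by positivity, ?_⟩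
  intro h θ ξ hh hh1 hKh hμh hθ hξ
  set w := h * θ / 2 with hw
  have hwabs : |w| ≤ h * K / 2 := by
    rw [hw, abs_div, abs_mul, abs_of_pos hh, abs_two]; gcongr
  have hw2 : |w| ≤ 1 / 2 := hwabs.trans (by linarith)
  have hw' := abs_le.1 hw2
  have hpos : 0 < 1 + w := by linarith
  set q := (1 + w)⁻¹ with hq
  have hq1 : q * (1 + w) = 1 := inv_mul_cancel₀ hpos.ne'
  have hq0 : 0 ≤ q := by positivity
  have hq2 : q ≤ 2 := by
    rw [hq, inv_le_comm₀ hpos (by norm_num)]; linarith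
  have hqabs : |q| ≤ 2 := by rw [abs_of_nonneg hq0]; exact hq2
  obtain ⟨r, hr⟩ : ∃ r, 2 * Real.log (1 + w) = 2 * w + h ^ 2 * r :=
    ⟨(2 * Real.log (1 + w) - 2 * w) / h ^ 2, by field_simp; ring⟩
  have hrabs : |r| ≤ K ^ 2 := by
    have h1 := log_quad w hw2
    have h2 : h ^ 2 * r = 2 * (Real.log (1 + w) - w) := by linarith
    have h3 : h ^ 2 * |r| ≤ 4 * w ^ 2 := by
      have : |h ^ 2 * r| = h ^ 2 * |r| := by rw [abs_mul, abs_of_pos (by positivity)]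
      rw [← this, h2, abs_mul, abs_two]; linarith
    have h4 : w ^ 2 ≤ (h * K / 2) ^ 2 := by rw [← sq_abs]; gcongr
    have h5 : h ^ 2 * |r| ≤ h ^ 2 * K ^ 2 := by nlinarith
    exact le_of_mul_le_mul_left h5 (by positivity)
  have hexp1 : Real.exp (-(2 * Real.log (1 + w)) / 2) = q := by
    rw [show -(2 * Real.log (1 + w)) / 2 = -Real.log (1 + w) by ring, Real.exp_neg, Real.exp_log hpos]
  have hexp2 : Real.exp (-(2 * Real.log (1 + w))) = q ^ 2 := by
    rw [← hexp1, ← Real.exp_nat_mul]; congr 1; push_cast; ring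
  obtain ⟨R, hR⟩ : ∃ R, Real.exp (ξ + μ * h) = 1 + ξ + ξ ^ 2 / 2 + μ * h + R :=
    ⟨Real.exp (ξ + μ * h) - 1 - ξ - ξ ^ 2 / 2 - μ * h, by ring⟩
  have hRabs : |R| ≤ (4 + |μ| + μ ^ 2 * 3) * (|ξ| ^ 3 + h * |ξ| + h ^ 2) := by
    have := exp_R1 μ ξ h hξ hh hμh
    rwa [hR, show 1 + ξ + ξ ^ 2 / 2 + μ * h + R - 1 - ξ - ξ ^ 2 / 2 - μ * h = R by ring] at this
  have hqe : q = 1 - w * q := by linarith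
  have hmain : (θ * Real.exp (ξ + μ * h) / (1 + w) - θ - ν * (2 * Real.log (1 + w)))
      - ellStep h (2 * Real.log (1 + w)) ξ
      = θ * q * R - h * (ξ * q * r) + h * ξ ^ 2 * (θ ^ 2 * q ^ 2 / 8) + h ^ 2 * (θ ^ 3 * q / 4)
        - h ^ 2 * (θ ^ 2 * μ * q / 2) + h ^ 2 * (-ν * r + θ * r + h * r ^ 2 / 2 + r / 2) := by
    unfold ellStep
    rw [hexp1, hexp2, hr, hR, div_eq_mul_inv _ (1 + w), ← hq]
    have hν : ν = μ + 1 / 2 := by rw [hμ]; ring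
    rw [hν]
    have e1 : ξ ^ 2 * (1 - q ^ 2) / (2 * h) = ξ ^ 2 * (θ * q * (1 + q) / 4) := by
      have : 1 - q ^ 2 = h * θ / 2 * q * (1 + q) := by rw [← hw]; linear_combination (1 + q) * (-hqe)
      rw [this]; field_simp; ring
    have e2 : q * (2 * w + h ^ 2 * r) * ξ / h = q * (θ + h * r) * ξ := by
      rw [hw]; field_simp
    have e3 : (2 * w + h ^ 2 * r) ^ 2 / (2 * h) = h * (θ + h * r) ^ 2 / 2 := by
      rw [hw]; field_simp
    rw [e1, e2, e3]
    have hqw : q = 1 - h * θ / 2 * q := hqe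
    rw [hw]
    linear_combination (θ + θ * μ * h - θ * q * ξ ^ 2 / 4 - h * θ ^ 2 / 2) * hqw
  rw [hmain]
  exact step_bound ν μ K h θ ξ q r R hK hh hh1 hθ hξ hqabs hrabs hRabs

/-- the discrete drift `2 c e^{Z}/(1 + c A)` -/
def dT (c μ h : ℝ) (x : ℕ → ℝ) (k : ℕ) : ℝ :=
  2 * c * Real.exp (dZ μ h x k) / (1 + c * dA μ h x k)

lemma dS_eq (c μ h : ℝ) (x : ℕ → ℝ) (k : ℕ) :
    dS c μ h x k = 2 * Real.log (1 + h * dT c μ h x k / 2) := by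
  unfold dS dT
  congr 3
  ring

lemma dA_succ (c μ h : ℝ) (x : ℕ → ℝ) (k : ℕ) (hk : 0 < 1 + c * dA μ h x k) :
    1 + c * dA μ h x (k + 1) = (1 + c * dA μ h x k) * (1 + h * dT c μ h x k / 2) := by
  have : dA μ h x (k + 1) = dA μ h x k + h * Real.exp (dZ μ h x k) := by
    rw [dA, Finset.sum_range_succ]; rfl
  rw [this, dT]
  field_simp
  ring

lemma dT_succ (c μ h : ℝ) (x : ℕ → ℝ) (k : ℕ) (hk : 0 < 1 + c * dA μ h x k)
    (hk1 : 0 < 1 + c * dA μ h x (k + 1)) :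
    dT c μ h x (k + 1) = dT c μ h x k * Real.exp (x k + μ * h) / (1 + h * dT c μ h x k / 2) := by
  have h1 := dA_succ c μ h x k hk
  have hz : dZ μ h x (k + 1) = dZ μ h x k + (x k + μ * h) := by
    rw [dZ, Finset.sum_range_succ]; rfl
  have hw : 0 < 1 + h * dT c μ h x k / 2 := by
    rw [h1] at hk1
    exact (mul_pos_iff_of_pos_left hk).1 hk1
  have e : dT c μ h x (k + 1) = 2 * c * Real.exp (dZ μ h x (k + 1)) / (1 + c * dA μ h x (k + 1)) := rfl
  have e2 : dT c μ h x k * (1 + c * dA μ h x k) = 2 * c * Real.exp (dZ μ h x k) := by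
    rw [dT]; field_simp
  rw [e, h1, hz, Real.exp_add, ← mul_assoc, ← e2]
  rw [div_eq_div_iff (mul_pos hk hw).ne' hw.ne']
  ring

section fin
variable (c ν h : ℝ) (x : ℕ → ℝ) (n : ℕ) (K : ℝ)

lemma dS_sum (μ : ℝ) (hpos : ∀ k ≤ n, 0 < 1 + c * dA μ h x k) :
    ∀ k ≤ n, ∑ j ∈ Finset.range k, dS c μ h x j = 2 * Real.log (1 + c * dA μ h x k) := by
  intro k
  induction k with
  | zero => intro _; simp [dA]
  | succ k ih =>
    intro hk
    have hk0 := hpos k (by omega)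
    have hk1 := hpos (k + 1) hk
    have h1 := dA_succ c μ h x k hk0
    have hw : 0 < 1 + h * dT c μ h x k / 2 := by
      rw [h1] at hk1
      exact (mul_pos_iff_of_pos_left hk0).1 hk1
    rw [Finset.sum_range_succ, ih (by omega), h1, Real.log_mul hk0.ne' hw.ne', dS_eq]
    ring

lemma fin_L (hK : 0 ≤ K) : ∃ C : ℝ, 0 ≤ C ∧ ∀ (c h : ℝ) (x : ℕ → ℝ) (n : ℕ), 0 < h → h ≤ 1 →
    K * h ≤ 1 → |ν - 1 / 2| * h ≤ 1 / 2 →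
    (∀ k ≤ n, 0 < 1 + c * dA (ν - 1 / 2) h x k) → (∀ k < n, |dT c (ν - 1 / 2) h x k| ≤ K) →
    (∀ k < n, |x k| ≤ 1 / 2) →
    |dL c (ν - 1 / 2) h x n - (dT c (ν - 1 / 2) h x n - 2 * c
      - ν * (2 * Real.log (1 + c * dA (ν - 1 / 2) h x n)))| ≤
      C * ∑ k ∈ Finset.range n, (|x k| ^ 3 + h * |x k| + h ^ 2) := by
  obtain ⟨C, hC, H⟩ := step_err ν K hK
  refine ⟨C, hC, ?_⟩
  intro c h x n hh hh1 hKh hμ hpos hT hx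
  set μ := ν - 1 / 2 with hμdef
  have e0 : dT c μ h x n - 2 * c = ∑ k ∈ Finset.range n, (dT c μ h x (k + 1) - dT c μ h x k) := by
    rw [Finset.sum_range_sub]
    congr 1
    simp [dT, dZ, dA]
  rw [e0, ← dS_sum c h x n μ hpos n le_rfl, Finset.mul_sum, ← Finset.sum_sub_distrib, dL,
    ← Finset.sum_sub_distrib, Finset.mul_sum]
  refine (Finset.abs_sum_le_sum_abs _ _).trans (Finset.sum_le_sum fun k hk => ?_)
  have hk' := Finset.mem_range.1 hk
  rw [abs_sub_comm, dT_succ c μ h x k (hpos k hk'.le) (hpos (k + 1) hk'), dS_eq]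
  exact H h _ _ hh hh1 hKh hμ (hT k hk') (hx k hk')

lemma fin_Zp (μ : ℝ) (hh : 0 < h) (hKh : K * h ≤ 1)
    (hpos : ∀ k ≤ n, 0 < 1 + c * dA μ h x k) (hT : ∀ k < n, |dT c μ h x k| ≤ K) :
    ∀ k ≤ n, |dZp c μ h x k - (dZ μ h x k - 2 * Real.log (1 + c * dA μ h x k))| ≤
      K * (h * ∑ j ∈ Finset.range n, |x j|) := by
  intro k hk
  rw [← dS_sum c h x n μ hpos k hk, dZp, dZ, ← Finset.sum_sub_distrib, ← Finset.sum_sub_distrib]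
  have hK : 0 ≤ K ∨ n = 0 := by
    rcases Nat.eq_zero_or_pos n with h0 | h0
    · right; exact h0
    · left; exact (abs_nonneg _).trans (hT 0 h0)
  rcases hK with hK | hK
  swap
  · subst hK
    obtain rfl : k = 0 := by omega
    simp
  rw [Finset.mul_sum, Finset.mul_sum]
  refine (Finset.abs_sum_le_sum_abs _ _).trans ?_
  refine le_trans (Finset.sum_le_sum fun j hj => ?_)
    (Finset.sum_le_sum_of_subset_of_nonneg (Finset.range_mono hk) fun j _ _ => by positivity)
  have hj' : j < n := lt_of_lt_of_le (Finset.mem_range.1 hj) hk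
  have hTj := hT j hj'
  set w := h * dT c μ h x j / 2 with hw
  have hwabs : |w| ≤ h * K / 2 := by
    rw [hw, abs_div, abs_mul, abs_of_pos hh, abs_two]; gcongr
  have hw2 : |w| ≤ 1 / 2 := hwabs.trans (by linarith)
  have hw' := abs_le.1 hw2
  have hp : 0 < 1 + w := by linarith
  have hexp1 : Real.exp (-dS c μ h x j / 2) = (1 + w)⁻¹ := by
    rw [dS_eq, ← hw, show -(2 * Real.log (1 + w)) / 2 = -Real.log (1 + w) by ring, Real.exp_neg,
      Real.exp_log hp]
  rw [hexp1]
  have e : μ * h + ((1 + w)⁻¹ * x j - dS c μ h x j) - (x j + μ * h - dS c μ h x j)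
      = -(w * (1 + w)⁻¹) * x j := by
    field_simp; ring
  rw [e, abs_mul, abs_neg, abs_mul, ← mul_assoc]
  have hq : |(1 + w)⁻¹| ≤ 2 := by
    rw [abs_of_pos (by positivity), inv_le_comm₀ hp (by norm_num)]; linarith
  have : |w| * |(1 + w)⁻¹| ≤ K * h := by
    calc |w| * |(1 + w)⁻¹| ≤ (h * K / 2) * 2 := by gcongr
      _ = K * h := by ring
  gcongr

lemma fin_Ap (μ ρ : ℝ) (hh : 0 < h) (hKh : K * h ≤ 1)
    (hpos : ∀ k ≤ n, 0 < 1 + c * dA μ h x k) (hT : ∀ k < n, |dT c μ h x k| ≤ K)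
    (hρ : ρ ≤ 1)
    (hZ : ∀ k ≤ n, |dZp c μ h x k - (dZ μ h x k - 2 * Real.log (1 + c * dA μ h x k))| ≤ ρ) :
    |dAp c μ h x n - dA μ h x n / (1 + c * dA μ h x n)| ≤
      (2 * ρ + 3 * (h * K)) * (dA μ h x n / (1 + c * dA μ h x n)) := by
  have e0 : dA μ h x n / (1 + c * dA μ h x n) = ∑ k ∈ Finset.range n,
      (dA μ h x (k + 1) / (1 + c * dA μ h x (k + 1)) - dA μ h x k / (1 + c * dA μ h x k)) := by
    rw [Finset.sum_range_sub (fun k => dA μ h x k / (1 + c * dA μ h x k))]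
    simp [dA]
  rw [e0, dAp, ← Finset.sum_sub_distrib, Finset.mul_sum]
  refine (Finset.abs_sum_le_sum_abs _ _).trans (Finset.sum_le_sum fun k hk => ?_)
  have hk' := Finset.mem_range.1 hk
  have hk0 := hpos k hk'.le
  have hk1 := hpos (k + 1) hk'
  have h1 := dA_succ c μ h x k hk0
  have hTk := hT k hk'
  have hK : 0 ≤ K := (abs_nonneg _).trans hTk
  set w := h * dT c μ h x k / 2 with hw
  have hp : 0 < 1 + w := by
    rw [h1] at hk1
    exact (mul_pos_iff_of_pos_left hk0).1 hk1
  have hwabs : |w| ≤ h * K / 2 := by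
    rw [hw, abs_div, abs_mul, abs_of_pos hh, abs_two]; gcongr
  set Q := dA μ h x (k + 1) / (1 + c * dA μ h x (k + 1)) - dA μ h x k / (1 + c * dA μ h x k) with hQ
  have hQe : Q = h * Real.exp (dZ μ h x k) / ((1 + c * dA μ h x k) ^ 2 * (1 + w)) := by
    have h2 : dA μ h x (k + 1) = dA μ h x k + h * Real.exp (dZ μ h x k) := by
      rw [dA, Finset.sum_range_succ]; rfl
    have h3 : Q = h * Real.exp (dZ μ h x k) /
        ((1 + c * dA μ h x k) * (1 + c * dA μ h x (k + 1))) := by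
      rw [hQ, div_sub_div _ _ hk1.ne' hk0.ne',
        mul_comm (1 + c * dA μ h x (k + 1)) (1 + c * dA μ h x k)]
      congr 1
      rw [h2]
      ring
    rw [h3, h1]; congr 1; ring
  have hQ0 : 0 ≤ Q := by rw [hQe]; positivity
  set R := dZp c μ h x k - (dZ μ h x k - 2 * Real.log (1 + c * dA μ h x k)) with hR
  have hRρ := hZ k hk'.le
  rw [← hR] at hRρ
  have e1 : h * Real.exp (dZp c μ h x k) = Q * ((1 + w) * Real.exp R) := by
    have : dZp c μ h x k = dZ μ h x k - 2 * Real.log (1 + c * dA μ h x k) + R := by rw [hR]; ring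
    rw [this, hQe, Real.exp_add, Real.exp_sub, show 2 * Real.log (1 + c * dA μ h x k)
      = Real.log (1 + c * dA μ h x k) + Real.log (1 + c * dA μ h x k) by ring, Real.exp_add,
      Real.exp_log hk0]
    field_simp
  rw [e1, show Q * ((1 + w) * Real.exp R) - Q = ((Real.exp R - 1) + w * Real.exp R) * Q by ring,
    abs_mul, abs_of_nonneg hQ0]
  refine mul_le_mul_of_nonneg_right ?_ hQ0
  have hR1 : |R| ≤ 1 := hRρ.trans hρ
  have g1 := Real.abs_exp_sub_one_le hR1
  have g2 : Real.exp R ≤ 3 := by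
    have := (abs_le.1 g1).2
    linarith
  refine (abs_add_le _ _).trans ?_
  rw [abs_mul, abs_of_pos (Real.exp_pos R)]
  have : |w| * Real.exp R ≤ h * K / 2 * 3 := by gcongr
  have : 0 ≤ h * K := by positivity
  linarith

end fin

/-- increments of a path on the grid of mesh `h` -/
def incr (b : ℝ → ℝ) (h : ℝ) (k : ℕ) : ℝ := b (((k + 1 : ℕ) : ℝ) * h) - b ((k : ℝ) * h)

lemma dZ_incr (b : ℝ → ℝ) (b0 : b 0 = 0) (μ h : ℝ) (k : ℕ) :
    dZ μ h (incr b h) k = b (k * h) + μ * (k * h) := by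
  have := Finset.sum_range_sub (fun k : ℕ => b ((k : ℝ) * h) + μ * ((k : ℝ) * h)) k
  simp only [Nat.cast_zero, zero_mul, mul_zero, b0, add_zero, sub_zero] at this
  rw [← this, dZ]
  refine Finset.sum_congr rfl fun j _ => ?_
  simp only [incr]
  push_cast
  ring

lemma grid_unif (F : ℝ → ℝ) (hF : Continuous F) (t : ℝ) (ht : 0 < t) (ε : ℝ) (hε : 0 < ε) :
    ∀ᶠ n : ℕ in atTop, ∀ k < n, ∀ s ∈ Set.Icc ((k : ℝ) * (t / n)) (((k + 1 : ℕ) : ℝ) * (t / n)),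
      |F s - F ((k : ℝ) * (t / n))| ≤ ε := by
  have hu := (isCompact_Icc (a := (0 : ℝ)) (b := t)).uniformContinuousOn_of_continuous
    hF.continuousOn
  rw [Metric.uniformContinuousOn_iff_le] at hu
  obtain ⟨δ, hδ, H⟩ := hu ε hε
  have hlim : Tendsto (fun n : ℕ => t / (n : ℝ)) atTop (𝓝 0) := tendsto_const_div_atTop_nhds_zero_nat t
  filter_upwards [hlim.eventually (gt_mem_nhds hδ), eventually_gt_atTop 0] with n hn hn0 k hk s hs
  have hn0' : (0 : ℝ) < n := by exact_mod_cast hn0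
  have hh : 0 < t / n := by positivity
  have hk1 : ((k + 1 : ℕ) : ℝ) * (t / n) ≤ t := by
    have : ((k + 1 : ℕ) : ℝ) ≤ n := by exact_mod_cast hk
    calc ((k + 1 : ℕ) : ℝ) * (t / n) ≤ n * (t / n) := by gcongr
      _ = t := by field_simp
  have hk0 : 0 ≤ (k : ℝ) * (t / n) := by positivity
  have hlen : ((k + 1 : ℕ) : ℝ) * (t / n) = (k : ℝ) * (t / n) + t / n := by push_cast; ring
  have := H s ⟨hk0.trans hs.1, hs.2.trans hk1⟩ ((k : ℝ) * (t / n)) ⟨hk0, by linarith⟩ (by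
    rw [Real.dist_eq, abs_of_nonneg (by linarith [hs.1])]
    linarith [hs.2])
  rwa [Real.dist_eq] at this

lemma riemann_lim (F : ℝ → ℝ) (hF : Continuous F) (t : ℝ) (ht : 0 < t) :
    Tendsto (fun n : ℕ => ∑ k ∈ Finset.range n, (t / n) * F ((k : ℝ) * (t / n))) atTop
      (𝓝 (∫ s in (0 : ℝ)..t, F s)) := by
  rw [Metric.tendsto_atTop']
  intro ε hε
  have hε' : 0 < ε / (2 * t) := by positivity
  obtain ⟨N, hN⟩ := eventually_atTop.1 ((grid_unif F hF t ht _ hε').and (eventually_gt_atTop 0))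
  refine ⟨N, fun n hn => ?_⟩
  obtain ⟨H, hn0⟩ := hN n hn.le
  have hn0' : (0 : ℝ) < n := by exact_mod_cast hn0
  have hh : 0 < t / n := by positivity
  have hsumI := intervalIntegral.sum_integral_adjacent_intervals (μ := volume) (f := F)
    (a := fun k : ℕ => (k : ℝ) * (t / n)) (n := n) (fun k _ => hF.intervalIntegrable _ _)
  simp only [Nat.cast_zero, zero_mul] at hsumI
  rw [show (n : ℝ) * (t / n) = t by field_simp] at hsumI
  rw [← hsumI, dist_comm, Real.dist_eq, ← Finset.sum_sub_distrib]
  calc |∑ k ∈ Finset.range n, ((∫ s in ((k : ℝ) * (t / n))..(((k + 1 : ℕ) : ℝ) * (t / n)), F s)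
        - (t / n) * F ((k : ℝ) * (t / n)))|
      ≤ ∑ k ∈ Finset.range n, ε / (2 * t) * (t / n) := by
        refine (Finset.abs_sum_le_sum_abs _ _).trans (Finset.sum_le_sum fun k hk => ?_)
        have hlen : ((k + 1 : ℕ) : ℝ) * (t / n) - (k : ℝ) * (t / n) = t / n := by push_cast; ring
        have e : (t / n) * F ((k : ℝ) * (t / n)) =
            ∫ s in ((k : ℝ) * (t / n))..(((k + 1 : ℕ) : ℝ) * (t / n)), F ((k : ℝ) * (t / n)) := by
          rw [intervalIntegral.integral_const, hlen, smul_eq_mul]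
        rw [e, ← intervalIntegral.integral_sub (hF.intervalIntegrable _ _)
          (continuous_const.intervalIntegrable _ _)]
        have := intervalIntegral.norm_integral_le_of_norm_le_const
          (a := (k : ℝ) * (t / n)) (b := ((k + 1 : ℕ) : ℝ) * (t / n)) (C := ε / (2 * t))
          (f := fun s => F s - F ((k : ℝ) * (t / n))) (fun s hs => by
            rw [Set.uIoc_of_le (by linarith)] at hs
            exact H k (Finset.mem_range.1 hk) s ⟨hs.1.le, hs.2⟩)
        rwa [hlen, abs_of_pos hh, Real.norm_eq_abs] at this
    _ = ε / 2 := by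
        rw [Finset.sum_const, Finset.card_range, nsmul_eq_mul]; field_simp
    _ < ε := by linarith

lemma dA_incr_lim (b : ℝ → ℝ) (hb : Continuous b) (b0 : b 0 = 0) (μ t : ℝ) (ht : 0 < t) :
    Tendsto (fun n : ℕ => dA μ (t / n) (incr b (t / n)) n) atTop
      (𝓝 (∫ s in (0 : ℝ)..t, Real.exp (b s + μ * s))) := by
  have := riemann_lim (fun s => Real.exp (b s + μ * s)) (by fun_prop) t ht
  refine this.congr fun n => ?_
  rw [dA]
  refine Finset.sum_congr rfl fun k _ => ?_
  rw [dZ_incr b b0]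

lemma dZ_incr_end (b : ℝ → ℝ) (b0 : b 0 = 0) (μ t : ℝ) (n : ℕ) (hn : 0 < n) :
    dZ μ (t / n) (incr b (t / n)) n = b t + μ * t := by
  have hn0' : (0 : ℝ) < n := by exact_mod_cast hn
  rw [dZ_incr b b0, show (n : ℝ) * (t / n) = t by field_simp]

lemma dA_mono (μ h : ℝ) (hh : 0 < h) (x : ℕ → ℝ) {k n : ℕ} (hkn : k ≤ n) :
    dA μ h x k ≤ dA μ h x n := by
  unfold dA
  exact Finset.sum_le_sum_of_subset_of_nonneg (Finset.range_mono hkn) fun j _ _ => by positivity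

lemma dA_nonneg (μ h : ℝ) (hh : 0 < h) (x : ℕ → ℝ) (k : ℕ) : 0 ≤ dA μ h x k := by
  unfold dA
  exact Finset.sum_nonneg fun j _ => by positivity

lemma squeeze_abs {f g : ℕ → ℝ} (h : ∀ᶠ j in atTop, |f j| ≤ g j) (hg : Tendsto g atTop (𝓝 0)) :
    Tendsto f atTop (𝓝 0) :=
  squeeze_zero_norm' (by simpa only [Real.norm_eq_abs] using h) hg

theorem path_limit (b : ℝ → ℝ) (hb : Continuous b) (b0 : b 0 = 0) (ν c t : ℝ) (ht : 0 < t)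
    (N : ℕ → ℕ) (hN : Tendsto N atTop atTop)
    (hcub : Tendsto (fun j => ∑ k ∈ Finset.range (N j), |incr b (t / N j) k| ^ 3) atTop (𝓝 0))
    (I : ℝ) (hI : I = ∫ s in (0 : ℝ)..t, Real.exp (b s + (ν - 1 / 2) * s)) (hpos : 0 < 1 + c * I) :
    Tendsto (fun j => dL c (ν - 1 / 2) (t / N j) (incr b (t / N j)) (N j)) atTop
      (𝓝 (2 * c * Real.exp (b t + (ν - 1 / 2) * t) / (1 + c * I) - 2 * c
        - ν * (2 * Real.log (1 + c * I)))) ∧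
    Tendsto (fun j => dZp c (ν - 1 / 2) (t / N j) (incr b (t / N j)) (N j)) atTop
      (𝓝 (b t + (ν - 1 / 2) * t - 2 * Real.log (1 + c * I))) ∧
    Tendsto (fun j => dAp c (ν - 1 / 2) (t / N j) (incr b (t / N j)) (N j)) atTop
      (𝓝 (I / (1 + c * I))) := by
  set μ := ν - 1 / 2 with hμ
  have hA : Tendsto (fun j => dA μ (t / N j) (incr b (t / N j)) (N j)) atTop (𝓝 I) := by
    rw [hI]; exact (dA_incr_lim b hb b0 μ t ht).comp hN
  have hAc : Tendsto (fun j => 1 + c * dA μ (t / N j) (incr b (t / N j)) (N j)) atTop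
      (𝓝 (1 + c * I)) := (hA.const_mul c).const_add 1
  have hh0 : Tendsto (fun j => t / (N j : ℝ)) atTop (𝓝 0) :=
    (tendsto_const_div_atTop_nhds_zero_nat t).comp hN
  obtain ⟨Mz, hMz⟩ := (isCompact_Icc (a := (0 : ℝ)) (b := t)).exists_bound_of_continuousOn
    (f := fun s => b s + μ * s) (by fun_prop)
  set δ := min 1 ((1 + c * I) / 2) with hδ
  have hδ0 : 0 < δ := by rw [hδ]; positivity
  set K := 2 * |c| * Real.exp Mz / δ with hK
  have hK0 : 0 ≤ K := by rw [hK]; positivity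
  have hNpos : ∀ᶠ j in atTop, 0 < N j := hN.eventually (eventually_gt_atTop 0)
  have hposk : ∀ᶠ j in atTop, ∀ k ≤ N j, δ ≤ 1 + c * dA μ (t / N j) (incr b (t / N j)) k := by
    filter_upwards [hNpos, hAc.eventually (lt_mem_nhds (show (1 + c * I) / 2 < 1 + c * I by linarith))]
      with j hj hj2 k hk
    have hj' : (0 : ℝ) < N j := by exact_mod_cast hj
    have hh : 0 < t / N j := by positivity
    have m1 := dA_mono μ _ hh (incr b (t / N j)) hk
    have m2 := dA_nonneg μ _ hh (incr b (t / N j)) k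
    rcases le_total 0 c with hc | hc
    · have : 0 ≤ c * dA μ (t / N j) (incr b (t / N j)) k := by positivity
      linarith [min_le_left 1 ((1 + c * I) / 2)]
    · have : c * dA μ (t / N j) (incr b (t / N j)) (N j) ≤ c * dA μ (t / N j) (incr b (t / N j)) k :=
        mul_le_mul_of_nonpos_left m1 hc
      linarith [min_le_right 1 ((1 + c * I) / 2)]
  have hTk : ∀ᶠ j in atTop, ∀ k < N j, |dT c μ (t / N j) (incr b (t / N j)) k| ≤ K := by
    filter_upwards [hNpos, hposk] with j hj hj2 k hk
    have hj' : (0 : ℝ) < N j := by exact_mod_cast hj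
    have hh : 0 < t / N j := by positivity
    have h1 := hj2 k hk.le
    have h2 : dZ μ (t / N j) (incr b (t / N j)) k ≤ Mz := by
      rw [dZ_incr b b0]
      refine (le_abs_self _).trans (hMz _ ⟨by positivity, ?_⟩)
      have : (k : ℝ) ≤ N j := by exact_mod_cast hk.le
      calc (k : ℝ) * (t / N j) ≤ N j * (t / N j) := by gcongr
        _ = t := by field_simp
    rw [dT, abs_div, abs_mul, abs_mul, abs_two, abs_of_pos (Real.exp_pos _),
      abs_of_pos (hδ0.trans_le h1), hK]
    gcongr
  have hxk : ∀ ε > 0, ∀ᶠ j in atTop, ∀ k < N j, |incr b (t / N j) k| ≤ ε := by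
    intro ε hε
    filter_upwards [hN.eventually (grid_unif b hb t ht ε hε), hNpos] with j hj hj0 k hk
    have hj' : (0 : ℝ) < N j := by exact_mod_cast hj0
    have hh : 0 < t / N j := by positivity
    refine hj k hk _ ⟨?_, le_rfl⟩
    push_cast; nlinarith
  have hxsum : Tendsto (fun j => (t / N j) * ∑ k ∈ Finset.range (N j), |incr b (t / N j) k|) atTop
      (𝓝 0) := by
    rw [Metric.tendsto_nhds]
    intro ε hε
    filter_upwards [hxk (ε / (2 * t)) (by positivity), hNpos] with j hj hj0
    have hj' : (0 : ℝ) < N j := by exact_mod_cast hj0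
    have hh : 0 < t / N j := by positivity
    rw [Real.dist_eq, sub_zero, abs_of_nonneg (by positivity)]
    calc (t / N j) * ∑ k ∈ Finset.range (N j), |incr b (t / N j) k|
        ≤ (t / N j) * ∑ k ∈ Finset.range (N j), ε / (2 * t) := by
          gcongr with k hk
          exact hj k (Finset.mem_range.1 hk)
      _ = ε / 2 := by rw [Finset.sum_const, Finset.card_range, nsmul_eq_mul]; field_simp
      _ < ε := by linarith
  have hKh : ∀ᶠ j in atTop, K * (t / N j) ≤ 1 := by
    have : Tendsto (fun j => K * (t / (N j : ℝ))) atTop (𝓝 (K * 0)) := hh0.const_mul K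
    rw [mul_zero] at this
    exact (this.eventually (gt_mem_nhds one_pos)).mono fun j hj => hj.le
  have hμh : ∀ᶠ j in atTop, |μ| * (t / N j) ≤ 1 / 2 := by
    have : Tendsto (fun j => |μ| * (t / (N j : ℝ))) atTop (𝓝 (|μ| * 0)) := hh0.const_mul _
    rw [mul_zero] at this
    exact (this.eventually (gt_mem_nhds (by norm_num : (0 : ℝ) < 1 / 2))).mono fun j hj => hj.le
  have hh1 : ∀ᶠ j in atTop, t / (N j : ℝ) ≤ 1 :=
    (hh0.eventually (gt_mem_nhds one_pos)).mono fun j hj => hj.le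
  have hlog : Tendsto (fun j => Real.log (1 + c * dA μ (t / N j) (incr b (t / N j)) (N j))) atTop
      (𝓝 (Real.log (1 + c * I))) := hAc.log hpos.ne'
  have hZend : Tendsto (fun j => dZ μ (t / N j) (incr b (t / N j)) (N j)) atTop
      (𝓝 (b t + μ * t)) := by
    refine tendsto_const_nhds.congr' ?_
    filter_upwards [hNpos] with j hj
    rw [dZ_incr_end b b0 μ t _ hj]
  set ρ : ℕ → ℝ := fun j => K * ((t / N j) * ∑ k ∈ Finset.range (N j), |incr b (t / N j) k|) with hρ
  have hρ0 : Tendsto ρ atTop (𝓝 0) := by simpa using hxsum.const_mul K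
  have hZpk : ∀ᶠ j in atTop, ∀ k ≤ N j, |dZp c μ (t / N j) (incr b (t / N j)) k -
      (dZ μ (t / N j) (incr b (t / N j)) k
        - 2 * Real.log (1 + c * dA μ (t / N j) (incr b (t / N j)) k))| ≤ ρ j := by
    filter_upwards [hNpos, hposk, hTk, hKh] with j hj h1 h2 h3
    have hj' : (0 : ℝ) < N j := by exact_mod_cast hj
    exact fin_Zp c (t / N j) _ (N j) K μ (by positivity) h3 (fun k hk => hδ0.trans_le (h1 k hk)) h2
  refine ⟨?_, ?_, ?_⟩
  · obtain ⟨C, hC, H⟩ := fin_L ν K hK0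
    have hbd : ∀ᶠ j in atTop, |dL c μ (t / N j) (incr b (t / N j)) (N j) -
        (dT c μ (t / N j) (incr b (t / N j)) (N j) - 2 * c
        - ν * (2 * Real.log (1 + c * dA μ (t / N j) (incr b (t / N j)) (N j))))| ≤
        C * (∑ k ∈ Finset.range (N j), |incr b (t / N j) k| ^ 3 +
          (t / N j) * ∑ k ∈ Finset.range (N j), |incr b (t / N j) k| + t * (t / N j)) := by
      filter_upwards [hNpos, hposk, hTk, hKh, hμh, hh1, hxk (1 / 2) (by norm_num)]
        with j hj h1 h2 h3 h4 h5 h6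
      have hj' : (0 : ℝ) < N j := by exact_mod_cast hj
      refine (H c (t / N j) (incr b (t / N j)) (N j) (by positivity) h5 h3 h4
        (fun k hk => hδ0.trans_le (h1 k hk)) h2 h6).trans (le_of_eq ?_)
      rw [Finset.sum_add_distrib, Finset.sum_add_distrib, ← Finset.mul_sum, Finset.sum_const,
        Finset.card_range, nsmul_eq_mul]
      congr 2
      field_simp
    have hr0 : Tendsto (fun j => C * (∑ k ∈ Finset.range (N j), |incr b (t / N j) k| ^ 3 +
          (t / N j) * ∑ k ∈ Finset.range (N j), |incr b (t / N j) k| + t * (t / N j))) atTop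
          (𝓝 0) := by
      have := ((hcub.add hxsum).add (hh0.const_mul t)).const_mul C
      simpa using this
    have hdiff := squeeze_abs hbd hr0
    have hTend : Tendsto (fun j => dT c μ (t / N j) (incr b (t / N j)) (N j)) atTop
        (𝓝 (2 * c * Real.exp (b t + μ * t) / (1 + c * I))) := by
      unfold dT
      exact (((Real.continuous_exp.tendsto _).comp hZend).const_mul _).div hAc hpos.ne'
    have := hdiff.add ((hTend.sub_const (2 * c)).sub ((hlog.const_mul 2).const_mul ν))
    rw [zero_add] at this
    refine this.congr fun j => ?_
    ring
  · have hbd := hZpk.mono fun j hj => hj (N j) le_rfl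
    have hdiff := squeeze_abs hbd hρ0
    have := hdiff.add (hZend.sub (hlog.const_mul 2))
    rw [zero_add] at this
    refine this.congr fun j => ?_
    ring
  · have hQ : Tendsto (fun j => dA μ (t / N j) (incr b (t / N j)) (N j) /
        (1 + c * dA μ (t / N j) (incr b (t / N j)) (N j))) atTop (𝓝 (I / (1 + c * I))) :=
      hA.div hAc hpos.ne'
    have hbd : ∀ᶠ j in atTop, |dAp c μ (t / N j) (incr b (t / N j)) (N j) -
        dA μ (t / N j) (incr b (t / N j)) (N j) /
        (1 + c * dA μ (t / N j) (incr b (t / N j)) (N j))| ≤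
        (2 * ρ j + 3 * ((t / N j) * K)) * (dA μ (t / N j) (incr b (t / N j)) (N j) /
        (1 + c * dA μ (t / N j) (incr b (t / N j)) (N j))) := by
      filter_upwards [hNpos, hposk, hTk, hKh, hZpk, hρ0.eventually (gt_mem_nhds one_pos)]
        with j hj h1 h2 h3 h4 h5
      have hj' : (0 : ℝ) < N j := by exact_mod_cast hj
      exact fin_Ap c (t / N j) _ (N j) K μ (ρ j) (by positivity) h3
        (fun k hk => hδ0.trans_le (h1 k hk)) h2 h5.le h4
    have hr0 : Tendsto (fun j => (2 * ρ j + 3 * ((t / N j) * K)) *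
        (dA μ (t / N j) (incr b (t / N j)) (N j) /
        (1 + c * dA μ (t / N j) (incr b (t / N j)) (N j)))) atTop (𝓝 0) := by
      have := ((hρ0.const_mul 2).add ((hh0.mul_const K).const_mul 3)).mul hQ
      simpa using this
    have hdiff := squeeze_abs hbd hr0
    have := hdiff.add hQ
    rw [zero_add] at this
    refine this.congr fun j => ?_
    ring

lemma gauss_cube (h : ℝ) (hh : 0 ≤ h) :
    ∫⁻ x, ENNReal.ofReal (|x| ^ 3) ∂(gaussianReal 0 h.toNNReal) =
      ENNReal.ofReal ((√h) ^ 3) * ∫⁻ x, ENNReal.ofReal (|x| ^ 3) ∂(gaussianReal 0 1) := by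
  have h1 := gaussianReal_map_const_mul (μ := 0) (v := 1) (√h)
  have h2 : gaussianReal (√h * 0) (NNReal.mk ((√h) ^ 2) (sq_nonneg _) * 1) =
      gaussianReal 0 h.toNNReal := by
    congr 1
    · simp
    · ext
      simp [Real.sq_sqrt hh, hh]
  rw [← h2, ← h1, lintegral_map (by fun_prop) (by fun_prop), ← lintegral_const_mul _ (by fun_prop)]
  refine lintegral_congr fun x => ?_
  rw [← ENNReal.ofReal_mul (by positivity), abs_mul, mul_pow, abs_of_nonneg (Real.sqrt_nonneg h)]

lemma gauss_cube_fin : ∫⁻ x, ENNReal.ofReal (|x| ^ 3) ∂(gaussianReal 0 1) ≠ ⊤ := by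
  have h := (memLp_id_gaussianReal (μ := 0) (v := 1) 3)
  have h' := MemLp.integrable_norm_pow (p := 3) (by exact_mod_cast h) (by norm_num)
  have h2 := h'.lintegral_lt_top
  simpa using h2.ne

section BM
variable {Ω : Type*} [MeasurableSpace Ω] {P : Measure Ω} {B : ℝ → Ω → ℝ}

lemma incr_meas (hB : IsBrownianMotion P B) (h : ℝ) (k : ℕ) :
    Measurable (fun ω => incr (fun s => B s ω) h k) := by
  unfold incr
  exact (hB.measurable _).sub (hB.measurable _)

lemma incr_law (hB : IsBrownianMotion P B) (h : ℝ) (hh : 0 ≤ h) (k : ℕ) :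
    P.map (fun ω => incr (fun s => B s ω) h k) = gaussianReal 0 h.toNNReal := by
  have := hB.gaussian_increments ((k : ℝ) * h) (((k + 1 : ℕ) : ℝ) * h) (by positivity)
    (by push_cast; nlinarith)
  rw [show ((k + 1 : ℕ) : ℝ) * h - (k : ℝ) * h = h by push_cast; ring] at this
  exact this

lemma incr_indep (hB : IsBrownianMotion P B) (h : ℝ) (hh : 0 ≤ h) :
    iIndepFun (fun (k : ℕ) (ω : Ω) => incr (fun s => B s ω) h k) P := by
  have := hB.indep_increments (fun i => (i : ℝ) * h) (fun i j hij => by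
    have : (i : ℝ) ≤ j := by exact_mod_cast hij
    exact mul_le_mul_of_nonneg_right this hh) (by simp)
  exact this

lemma cube_ae (hB : IsBrownianMotion P B) (t : ℝ) (ht : 0 < t) :
    ∀ᵐ ω ∂P, Tendsto (fun j : ℕ => ∑ k ∈ Finset.range ((j + 1) ^ 4),
      |incr (fun s => B s ω) (t / ((j + 1) ^ 4 : ℕ)) k| ^ 3) atTop (𝓝 0) := by
  set C := ∫⁻ x, ENNReal.ofReal (|x| ^ 3) ∂(gaussianReal 0 1) with hC
  have hm : ∀ (j k : ℕ), Measurable (fun ω => ENNReal.ofReal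
      (|incr (fun s => B s ω) (t / ((j + 1) ^ 4 : ℕ)) k| ^ 3)) := fun j k =>
    (((incr_meas hB _ k).abs).pow_const 3).ennreal_ofReal
  have hE : ∀ j : ℕ, ∫⁻ ω, ∑ k ∈ Finset.range ((j + 1) ^ 4),
      ENNReal.ofReal (|incr (fun s => B s ω) (t / ((j + 1) ^ 4 : ℕ)) k| ^ 3) ∂P
      = ENNReal.ofReal ((√t) ^ 3 * (1 / ((j : ℝ) + 1) ^ 2)) * C := by
    intro j
    rw [lintegral_finsetSum _ (fun k _ => hm j k)]
    have hterm : ∀ k ∈ Finset.range ((j + 1) ^ 4), ∫⁻ ω,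
        ENNReal.ofReal (|incr (fun s => B s ω) (t / ((j + 1) ^ 4 : ℕ)) k| ^ 3) ∂P =
        ENNReal.ofReal ((√(t / ((j + 1) ^ 4 : ℕ))) ^ 3) * C := by
      intro k _
      rw [hC, ← gauss_cube _ (by positivity), ← incr_law hB _ (by positivity) k,
        lintegral_map (by fun_prop) (incr_meas hB _ k)]
    rw [Finset.sum_congr rfl hterm, Finset.sum_const, Finset.card_range, nsmul_eq_mul, ← mul_assoc]
    congr 1
    rw [← ENNReal.ofReal_natCast, ← ENNReal.ofReal_mul (by positivity)]
    congr 1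
    have e : √(t / ((j + 1) ^ 4 : ℕ)) = √t / ((j : ℝ) + 1) ^ 2 := by
      rw [Real.sqrt_div ht.le]
      congr 1
      rw [show (((j + 1) ^ 4 : ℕ) : ℝ) = (((j : ℝ) + 1) ^ 2) ^ 2 by push_cast; ring]
      exact Real.sqrt_sq (by positivity)
    rw [e]
    push_cast
    field_simp
  have hsum : ∑' j : ℕ, ∫⁻ ω, ∑ k ∈ Finset.range ((j + 1) ^ 4),
      ENNReal.ofReal (|incr (fun s => B s ω) (t / ((j + 1) ^ 4 : ℕ)) k| ^ 3) ∂P ≠ ⊤ := by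
    simp_rw [hE]
    rw [ENNReal.tsum_mul_right]
    refine ENNReal.mul_ne_top ?_ gauss_cube_fin
    have hs : Summable (fun j : ℕ => (√t) ^ 3 * (1 / ((j : ℝ) + 1) ^ 2)) := by
      refine Summable.mul_left _ ?_
      have := (summable_nat_add_iff 1).2 (Real.summable_one_div_nat_pow.2 (by norm_num : 1 < 2))
      simpa using this
    exact hs.tsum_ofReal_ne_top
  rw [← lintegral_tsum (fun j => (Finset.measurable_sum _ fun k _ => hm j k).aemeasurable)] at hsum
  have hfin := ae_lt_top (Measurable.tsum fun j => Finset.measurable_sum _ fun k _ => hm j k) hsum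
  filter_upwards [hfin] with ω hω
  have h0 := ENNReal.tendsto_atTop_zero_of_tsum_ne_top hω.ne
  have h1 := (ENNReal.tendsto_toReal ENNReal.zero_ne_top).comp h0
  simp only [ENNReal.toReal_zero] at h1
  refine h1.congr fun j => ?_
  simp only [Function.comp]
  rw [← ENNReal.ofReal_sum_of_nonneg (fun k _ => by positivity),
    ENNReal.toReal_ofReal (Finset.sum_nonneg fun k _ => by positivity)]

lemma Adrift_meas (hB : IsBrownianMotion P B) (ν t : ℝ) (ht : 0 < t) :
    Measurable (Adrift B ν t) := by
  refine measurable_of_tendsto_metrizable (f := fun (n : ℕ) ω =>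
    dA (ν - 1 / 2) (t / n) (incr (fun s => B s ω) (t / n)) n) (fun n => ?_) ?_
  · exact meas_dA _ (ν - 1 / 2) (t / n) (fun k ω => incr (fun s => B s ω) (t / n) k) n
      (fun k _ => incr_meas hB _ k)
  · rw [tendsto_pi_nhds]
    intro ω
    exact dA_incr_lim (fun s => B s ω) (hB.continuous_paths ω) (hB.start ω) (ν - 1 / 2) t ht

/-- the limiting density -/
def Dc (ν c z x : ℝ) : ℝ :=
  2 * c * Real.exp z / (1 + c * x) - 2 * c - ν * (2 * Real.log (1 + c * x))

theorem key_ineq (hB : IsBrownianMotion P B) (ν c t : ℝ) (ht : 0 < t) (f : ℝ × ℝ → ℝ)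
    (hf : Continuous f) (C : ℝ) (hfC : ∀ p, f p ≤ C) :
    ∫⁻ ω, {ω | 0 < 1 + c * Adrift B ν t ω}.indicator (fun ω =>
      ENNReal.ofReal (f (B t ω + (ν - 1 / 2) * t - 2 * Real.log (1 + c * Adrift B ν t ω),
        Adrift B ν t ω / (1 + c * Adrift B ν t ω))) *
      ENNReal.ofReal (Real.exp (Dc ν c (B t ω + (ν - 1 / 2) * t) (Adrift B ν t ω)))) ω ∂P
    ≤ ∫⁻ ω, ENNReal.ofReal (f (B t ω + (ν - 1 / 2) * t, Adrift B ν t ω)) ∂P := by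
  have := hB.isProbabilityMeasure
  set N : ℕ → ℕ := fun j => (j + 1) ^ 4 with hNdef
  have hN : Tendsto N atTop atTop :=
    (tendsto_pow_atTop (by norm_num)).comp (tendsto_add_atTop_nat 1)
  have hNpos : ∀ j, 0 < N j := fun j => by simp only [hNdef]; positivity
  have hhpos : ∀ j, 0 < t / (N j : ℝ) := fun j => by
    have : (0 : ℝ) < N j := by exact_mod_cast hNpos j
    positivity
  have hg : Measurable (fun p => ENNReal.ofReal (f p)) := hf.measurable.ennreal_ofReal
  let F : ℕ → Ω → ℝ≥0∞ := fun j ω =>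
    ENNReal.ofReal (f (dZp c (ν - 1 / 2) (t / N j) (incr (fun s => B s ω) (t / N j)) (N j),
      dAp c (ν - 1 / 2) (t / N j) (incr (fun s => B s ω) (t / N j)) (N j))) *
    ENNReal.ofReal (Real.exp (dL c (ν - 1 / 2) (t / N j) (incr (fun s => B s ω) (t / N j)) (N j)))
  let G : ℕ → Ω → ℝ≥0∞ := fun j ω =>
    ENNReal.ofReal (f (dZ (ν - 1 / 2) (t / N j) (incr (fun s => B s ω) (t / N j)) (N j),
      dA (ν - 1 / 2) (t / N j) (incr (fun s => B s ω) (t / N j)) (N j)))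
  have hFG : ∀ j, ∫⁻ ω, F j ω ∂P = ∫⁻ ω, G j ω ∂P := fun j =>
    girs_main P c (ν - 1 / 2) (t / N j) (fun k ω => incr (fun s => B s ω) (t / N j) k)
      (hhpos j) (fun k => incr_meas hB _ k) (incr_indep hB _ (hhpos j).le)
      (fun k => incr_law hB _ (hhpos j).le k) (N j) _ hg
  have hFm : ∀ j, Measurable (F j) := by
    intro j
    have h1 := meas_dZp _ c (ν - 1 / 2) (t / N j) (fun k ω => incr (fun s => B s ω) (t / N j) k)
      (N j) (fun k _ => incr_meas hB _ k)
    have h2 := meas_dAp _ c (ν - 1 / 2) (t / N j) (fun k ω => incr (fun s => B s ω) (t / N j) k)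
      (N j) (fun k _ => incr_meas hB _ k)
    have h3 := meas_dL _ c (ν - 1 / 2) (t / N j) (fun k ω => incr (fun s => B s ω) (t / N j) k)
      (N j) (fun k _ => incr_meas hB _ k)
    have h4 := hg.comp (h1.prodMk h2)
    exact h4.mul (Real.measurable_exp.comp h3).ennreal_ofReal
  have hGm : ∀ j, Measurable (G j) := by
    intro j
    have h1 := meas_dZ _ (ν - 1 / 2) (t / N j) (fun k ω => incr (fun s => B s ω) (t / N j) k)
      (N j) (fun k _ => incr_meas hB _ k)
    have h2 := meas_dA _ (ν - 1 / 2) (t / N j) (fun k ω => incr (fun s => B s ω) (t / N j) k)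
      (N j) (fun k _ => incr_meas hB _ k)
    have h4 := hg.comp (h1.prodMk h2)
    exact h4
  have hGlim : Tendsto (fun j => ∫⁻ ω, G j ω ∂P) atTop
      (𝓝 (∫⁻ ω, ENNReal.ofReal (f (B t ω + (ν - 1 / 2) * t, Adrift B ν t ω)) ∂P)) := by
    refine tendsto_lintegral_of_dominated_convergence (fun _ => ENNReal.ofReal C) hGm
      (fun j => Eventually.of_forall fun ω => ENNReal.ofReal_le_ofReal (hfC _)) (by simp)
      (Eventually.of_forall fun ω => ?_)
    refine (ENNReal.continuous_ofReal.tendsto _).comp ((hf.tendsto _).comp ?_)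
    refine Tendsto.prodMk_nhds ?_ ?_
    · refine tendsto_const_nhds.congr fun j => ?_
      exact (dZ_incr_end (fun s => B s ω) (hB.start ω) (ν - 1 / 2) t _ (hNpos j)).symm
    · exact (dA_incr_lim (fun s => B s ω) (hB.continuous_paths ω) (hB.start ω)
        (ν - 1 / 2) t ht).comp hN
  calc _ ≤ ∫⁻ ω, liminf (fun j => F j ω) atTop ∂P := by
        refine lintegral_mono_ae ?_
        filter_upwards [cube_ae hB t ht] with ω hω
        by_cases hpos : 0 < 1 + c * Adrift B ν t ω
        · rw [Set.indicator_of_mem (by exact hpos)]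
          obtain ⟨l1, l2, l3⟩ := path_limit (fun s => B s ω) (hB.continuous_paths ω) (hB.start ω)
            ν c t ht N hN hω (Adrift B ν t ω) rfl hpos
          have l4 := (ENNReal.continuous_ofReal.tendsto _).comp
            ((hf.tendsto _).comp (l2.prodMk_nhds l3))
          have l5 := (ENNReal.continuous_ofReal.tendsto _).comp ((Real.continuous_exp.tendsto _).comp l1)
          have l6 := ENNReal.Tendsto.mul l4 (Or.inr ENNReal.ofReal_ne_top) l5
            (Or.inr ENNReal.ofReal_ne_top)
          exact l6.liminf_eq.ge
        · rw [Set.indicator_of_notMem (by exact hpos)]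
          exact zero_le
    _ ≤ liminf (fun j => ∫⁻ ω, F j ω ∂P) atTop := lintegral_liminf_le hFm
    _ = _ := by
        simp_rw [hFG]
        exact hGlim.liminf_eq

lemma Adrift_nonneg (B : ℝ → Ω → ℝ) (ν t : ℝ) (ht : 0 < t) (ω : Ω) : 0 ≤ Adrift B ν t ω :=
  intervalIntegral.integral_nonneg ht.le fun _ _ => (Real.exp_pos _).le

lemma Dc_meas (hB : IsBrownianMotion P B) (ν c t : ℝ) (ht : 0 < t) :
    Measurable (fun ω => Dc ν c (B t ω + (ν - 1 / 2) * t) (Adrift B ν t ω)) := by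
  have h1 := Adrift_meas hB ν t ht
  have h2 := hB.measurable t
  unfold Dc
  fun_prop

lemma Dc_inv (ν a z x : ℝ) (ha : 0 < a) (hxa : 0 < 1 + -(1 / a) * x) (hx : 0 ≤ x) :
    Dc ν (1 / a) (z - 2 * Real.log (1 + -(1 / a) * x)) (max (x / (1 + -(1 / a) * x)) 0)
      = - Dc ν (-(1 / a)) z x := by
  set u := 1 + -(1 / a) * x with hu
  have h1 : 1 + 1 / a * (x / u) = u⁻¹ := by
    field_simp
    rw [hu]
    field_simp
    ring
  have h2 : Real.exp (z - 2 * Real.log u) = Real.exp z / u ^ 2 := by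
    rw [Real.exp_sub, two_mul, Real.exp_add, Real.exp_log hxa, sq]
  unfold Dc
  rw [max_eq_left (by positivity), h1, h2, Real.log_inv, ← hu]
  field_simp
  ring

lemma dir_one (hB : IsBrownianMotion P B) (ν t a : ℝ) (ht : 0 < t) (ha : 0 < a) :
    ∫⁻ ω, ENNReal.ofReal (Real.exp (Dc ν (1 / a) (B t ω + (ν - 1 / 2) * t) (Adrift B ν t ω))) ∂P
      ≤ P {ω | Adrift B ν t ω < a} := by
  have hAm := Adrift_meas hB ν t ht
  have hDm := Dc_meas hB ν (1 / a) t ht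
  have hset : MeasurableSet {ω | Adrift B ν t ω < a} := measurableSet_lt hAm measurable_const
  have hpos : ∀ ω, 0 < 1 + 1 / a * Adrift B ν t ω := fun ω => by
    have := Adrift_nonneg B ν t ht ω
    positivity
  have hlt : ∀ ω, Adrift B ν t ω / (1 + 1 / a * Adrift B ν t ω) < a := fun ω => by
    rw [div_lt_iff₀ (hpos ω)]
    have : a * (1 + 1 / a * Adrift B ν t ω) = a + Adrift B ν t ω := by field_simp
    linarith
  let f : ℕ → ℝ × ℝ → ℝ := fun k p => min 1 ((k : ℝ) * max 0 (a - p.2))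
  have hle : ∀ k : ℕ, ∫⁻ ω, ENNReal.ofReal (min 1 ((k : ℝ) *
      max 0 (a - Adrift B ν t ω / (1 + 1 / a * Adrift B ν t ω)))) *
      ENNReal.ofReal (Real.exp (Dc ν (1 / a) (B t ω + (ν - 1 / 2) * t) (Adrift B ν t ω))) ∂P
      ≤ P {ω | Adrift B ν t ω < a} := by
    intro k
    have := key_ineq hB ν (1 / a) t ht (f k) (by simp only [f]; fun_prop) 1
      (fun p => min_le_left _ _)
    have hu : {ω | 0 < 1 + 1 / a * Adrift B ν t ω} = Set.univ := by
      ext ω; simpa using hpos ω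
    rw [hu] at this
    simp only [Set.indicator_univ] at this
    refine this.trans ?_
    rw [← lintegral_indicator_one hset]
    refine lintegral_mono fun ω => ?_
    by_cases h : Adrift B ν t ω < a
    · rw [Set.indicator_of_mem (by exact h)]
      simp [f]
    · rw [Set.indicator_of_notMem (by exact h)]
      have : max 0 (a - Adrift B ν t ω) = 0 := max_eq_left (by linarith)
      simp [f, this]
  refine le_of_tendsto' (lintegral_tendsto_of_tendsto_of_monotone
    (f := fun (k : ℕ) ω => ENNReal.ofReal (min 1 ((k : ℝ) *
      max 0 (a - Adrift B ν t ω / (1 + 1 / a * Adrift B ν t ω)))) *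
      ENNReal.ofReal (Real.exp (Dc ν (1 / a) (B t ω + (ν - 1 / 2) * t) (Adrift B ν t ω))))
      (fun k => ?_) ?_ ?_) hle
  · refine Measurable.aemeasurable ?_
    fun_prop
  · refine Eventually.of_forall fun ω k l hkl => ?_
    have : (k : ℝ) ≤ l := by exact_mod_cast hkl
    dsimp only
    gcongr
  · refine Eventually.of_forall fun ω => ?_
    refine tendsto_const_nhds.congr' ?_
    have hd : 0 < a - Adrift B ν t ω / (1 + 1 / a * Adrift B ν t ω) := by linarith [hlt ω]
    obtain ⟨K, hK⟩ := exists_nat_ge (1 / (a - Adrift B ν t ω / (1 + 1 / a * Adrift B ν t ω)))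
    filter_upwards [eventually_ge_atTop K] with k hk
    have hk' : (K : ℝ) ≤ k := by exact_mod_cast hk
    rw [max_eq_right hd.le, min_eq_left]
    · simp
    · rw [← div_le_iff₀ hd]
      linarith

lemma dir_two (hB : IsBrownianMotion P B) (ν t a : ℝ) (ht : 0 < t) (ha : 0 < a) :
    P {ω | Adrift B ν t ω < a} ≤
    ∫⁻ ω, ENNReal.ofReal (Real.exp (Dc ν (1 / a) (B t ω + (ν - 1 / 2) * t) (Adrift B ν t ω))) ∂P
       := by
  have hAm := Adrift_meas hB ν t ht
  have hBm := hB.measurable t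
  have hDm := Dc_meas hB ν (-(1 / a)) t ht
  have hset : MeasurableSet {ω | Adrift B ν t ω < a} := measurableSet_lt hAm measurable_const
  have hseteq : {ω | 0 < 1 + -(1 / a) * Adrift B ν t ω} = {ω | Adrift B ν t ω < a} := by
    ext ω
    simp only [Set.mem_ofPred_eq]
    have : 1 + -(1 / a) * Adrift B ν t ω = (a - Adrift B ν t ω) / a := by field_simp; ring
    rw [this, div_pos_iff_of_pos_right ha, sub_pos]
  let g : ℝ × ℝ → ℝ := fun p => Real.exp (Dc ν (1 / a) p.1 (max p.2 0))
  have hg : Continuous g := by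
    have hp : ∀ p : ℝ × ℝ, 1 + 1 / a * max p.2 0 ≠ 0 := fun p => by
      have := le_max_right p.2 0
      positivity
    simp only [g, Dc]
    refine Real.continuous_exp.comp ?_
    refine ((Continuous.div (by fun_prop) (by fun_prop) hp).sub continuous_const).sub ?_
    exact ((Continuous.log (by fun_prop) hp).const_mul 2).const_mul ν
  have hle : ∀ K : ℕ, ∫⁻ ω, {ω | Adrift B ν t ω < a}.indicator (fun ω =>
      ENNReal.ofReal (min (g (B t ω + (ν - 1 / 2) * t - 2 * Real.log (1 + -(1 / a) * Adrift B ν t ω),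
        Adrift B ν t ω / (1 + -(1 / a) * Adrift B ν t ω))) K) *
      ENNReal.ofReal (Real.exp (Dc ν (-(1 / a)) (B t ω + (ν - 1 / 2) * t) (Adrift B ν t ω)))) ω ∂P
      ≤ ∫⁻ ω, ENNReal.ofReal (Real.exp
        (Dc ν (1 / a) (B t ω + (ν - 1 / 2) * t) (Adrift B ν t ω))) ∂P := by
    intro K
    have := key_ineq hB ν (-(1 / a)) t ht (fun p => min (g p) K) (hg.min continuous_const) K
      (fun p => min_le_right _ _)
    rw [hseteq] at this
    refine this.trans (lintegral_mono fun ω => ?_)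
    refine ENNReal.ofReal_le_ofReal ((min_le_left _ _).trans ?_)
    simp only [g, max_eq_left (Adrift_nonneg B ν t ht ω)]
    exact le_rfl
  rw [← lintegral_indicator_one hset]
  refine le_of_tendsto' (lintegral_tendsto_of_tendsto_of_monotone
    (f := fun (K : ℕ) ω => {ω | Adrift B ν t ω < a}.indicator (fun ω =>
      ENNReal.ofReal (min (g (B t ω + (ν - 1 / 2) * t - 2 * Real.log (1 + -(1 / a) * Adrift B ν t ω),
        Adrift B ν t ω / (1 + -(1 / a) * Adrift B ν t ω))) K) *
      ENNReal.ofReal (Real.exp (Dc ν (-(1 / a)) (B t ω + (ν - 1 / 2) * t) (Adrift B ν t ω)))) ω)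
      (fun k => ?_) ?_ ?_) hle
  · refine (Measurable.indicator ?_ hset).aemeasurable
    have hgm := hg.measurable
    have h1 : Measurable (fun ω => g (B t ω + (ν - 1 / 2) * t -
        2 * Real.log (1 + -(1 / a) * Adrift B ν t ω),
        Adrift B ν t ω / (1 + -(1 / a) * Adrift B ν t ω))) := hgm.comp (by fun_prop)
    fun_prop
  · refine Eventually.of_forall fun ω k l hkl => ?_
    have : (k : ℝ) ≤ l := by exact_mod_cast hkl
    dsimp only
    refine Set.indicator_le_indicator ?_
    gcongr
  · refine Eventually.of_forall fun ω => ?_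
    refine tendsto_const_nhds.congr' ?_
    by_cases h : Adrift B ν t ω < a
    · have hu : 0 < 1 + -(1 / a) * Adrift B ν t ω := by
        have : ω ∈ {ω | Adrift B ν t ω < a} := h
        rw [← hseteq] at this
        exact this
      obtain ⟨K, hK⟩ := exists_nat_ge (g (B t ω + (ν - 1 / 2) * t -
        2 * Real.log (1 + -(1 / a) * Adrift B ν t ω),
        Adrift B ν t ω / (1 + -(1 / a) * Adrift B ν t ω)))
      filter_upwards [eventually_ge_atTop K] with k hk
      have hk' : (K : ℝ) ≤ k := by exact_mod_cast hk
      rw [Set.indicator_of_mem (by exact h), Set.indicator_of_mem (by exact h),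
        min_eq_left (hK.trans hk')]
      simp only [g]
      rw [Dc_inv ν a _ _ ha hu (Adrift_nonneg B ν t ht ω), ← ENNReal.ofReal_mul (Real.exp_pos _).le,
        ← Real.exp_add]
      simp
    · refine Eventually.of_forall fun k => ?_
      dsimp only
      first | rw [Set.indicator_of_notMem (by exact h), Set.indicator_of_notMem (by exact h)] | rw [Set.indicator_of_notMem (by exact h)]

lemma cdf_lt (hB : IsBrownianMotion P B) (ν t a : ℝ) (ht : 0 < t) (ha : 0 < a) :
    Integrable (fun ω => Real.exp (Dc ν (1 / a) (B t ω + (ν - 1 / 2) * t) (Adrift B ν t ω))) P ∧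
    (P {ω | Adrift B ν t ω < a}).toReal =
      ∫ ω, Real.exp (Dc ν (1 / a) (B t ω + (ν - 1 / 2) * t) (Adrift B ν t ω)) ∂P := by
  have := hB.isProbabilityMeasure
  have heq := le_antisymm (dir_two hB ν t a ht ha) (dir_one hB ν t a ht ha)
  have hm := (Real.measurable_exp.comp (Dc_meas hB ν (1 / a) t ht))
  constructor
  · refine ⟨hm.aestronglyMeasurable, ?_⟩
    rw [hasFiniteIntegral_iff_ofReal (Eventually.of_forall fun ω => (Real.exp_pos _).le), ← heq]
    exact measure_lt_top _ _
  · rw [integral_eq_lintegral_of_nonneg_ae (Eventually.of_forall fun ω => (Real.exp_pos _).le)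
      hm.aestronglyMeasurable, heq]

lemma Dc_bound (ν a b z x : ℝ) (ha : 0 < a) (hab : a ≤ b) (hb : b ≤ 2 * a) (hx : 0 ≤ x) :
    Dc ν (1 / b) z x ≤ Dc ν (1 / a) z x + (2 / a + 2 * |ν| * Real.log 2) := by
  have hb0 : 0 < b := ha.trans_le hab
  have h1 : 2 * (1 / b) * Real.exp z / (1 + 1 / b * x) ≤ 2 * (1 / a) * Real.exp z / (1 + 1 / a * x) := by
    have e : ∀ y : ℝ, 0 < y → 2 * (1 / y) * Real.exp z / (1 + 1 / y * x) = 2 * Real.exp z / (y + x) := by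
      intro y hy
      field_simp
    rw [e a ha, e b hb0]
    gcongr
  have h2 : 0 ≤ 2 * (1 / b) := by positivity
  have hle : 1 + 1 / b * x ≤ 1 + 1 / a * x := by gcongr
  have hle2 : 1 + 1 / a * x ≤ 2 * (1 + 1 / b * x) := by
    have : 1 / a * x ≤ 2 * (1 / b * x) := by
      have : 1 / a ≤ 2 * (1 / b) := by
        rw [mul_one_div, div_le_div_iff₀ ha hb0]; linarith
      calc 1 / a * x ≤ 2 * (1 / b) * x := by gcongr
        _ = _ := by ring
    linarith
  have p1 : 0 < 1 + 1 / b * x := by positivity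
  have p2 : 0 < 1 + 1 / a * x := by positivity
  have l1 := Real.log_le_log p1 hle
  have l2 := Real.log_le_log p2 hle2
  rw [Real.log_mul (by norm_num) p1.ne'] at l2
  have h3 : ν * (Real.log (1 + 1 / a * x) - Real.log (1 + 1 / b * x)) ≤ |ν| * Real.log 2 := by
    calc _ ≤ |ν| * (Real.log (1 + 1 / a * x) - Real.log (1 + 1 / b * x)) := by
          refine mul_le_mul_of_nonneg_right (le_abs_self _) (by linarith)
      _ ≤ _ := by
          refine mul_le_mul_of_nonneg_left (by linarith) (abs_nonneg _)
  have e : 2 * (1 / a) = 2 / a := by ring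
  unfold Dc
  linarith

lemma Dc_form (ν a z x : ℝ) (ha : 0 < a) (hx : 0 ≤ x) :
    Real.exp (Dc ν (1 / a) z x) = a ^ (2 * ν) * Real.exp (-2 / a) *
      ((a + x) ^ (-(2 * ν)) * Real.exp (2 * Real.exp z / (a + x))) := by
  have hax : 0 < a + x := by linarith
  rw [Real.rpow_def_of_pos ha, Real.rpow_def_of_pos hax, ← Real.exp_add, ← Real.exp_add,
    ← Real.exp_add]
  congr 1
  have h1 : 1 + 1 / a * x = (a + x) / a := by field_simp
  unfold Dc
  rw [h1, Real.log_div hax.ne' ha.ne']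
  field_simp
  ring

lemma cdf_le (hB : IsBrownianMotion P B) (ν t a : ℝ) (ht : 0 < t) (ha : 0 < a) :
    (P {ω | Adrift B ν t ω ≤ a}).toReal =
      ∫ ω, Real.exp (Dc ν (1 / a) (B t ω + (ν - 1 / 2) * t) (Adrift B ν t ω)) ∂P := by
  have := hB.isProbabilityMeasure
  have hAm := Adrift_meas hB ν t ht
  let b : ℕ → ℝ := fun n => a + a / ((n : ℝ) + 1)
  have hba : ∀ n, a < b n := fun n => by
    have : 0 < a / ((n : ℝ) + 1) := by positivity
    simp only [b]; linarith
  have hb2 : ∀ n, b n ≤ 2 * a := fun n => by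
    have : a / ((n : ℝ) + 1) ≤ a := div_le_self ha.le (by linarith [Nat.cast_nonneg (α := ℝ) n])
    simp only [b]; linarith
  have hblim : Tendsto b atTop (𝓝 a) := by
    have h1 : Tendsto (fun n : ℕ => a * (1 / ((n : ℝ) + 1))) atTop (𝓝 (a * 0)) :=
      tendsto_one_div_add_atTop_nhds_zero_nat.const_mul a
    have h2 := h1.const_add a
    simp only [mul_zero, add_zero, mul_one_div] at h2
    exact h2
  have hbanti : Antitone b := fun m n hmn => by
    have : (m : ℝ) ≤ n := by exact_mod_cast hmn
    simp only [b]
    gcongr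
  have hset : (⋂ n, {ω | Adrift B ν t ω < b n}) = {ω | Adrift B ν t ω ≤ a} := by
    ext ω
    simp only [Set.mem_iInter, Set.mem_ofPred_eq]
    constructor
    · intro h
      exact ge_of_tendsto' hblim fun n => (h n).le
    · intro h n
      exact h.trans_lt (hba n)
  have hl := tendsto_measure_iInter_atTop (μ := P) (s := fun n => {ω | Adrift B ν t ω < b n})
    (fun n => (measurableSet_lt hAm measurable_const).nullMeasurableSet)
    (fun m n hmn ω hω => lt_of_lt_of_le hω (hbanti hmn)) ⟨0, measure_ne_top _ _⟩
  rw [hset] at hl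
  have hl' := (ENNReal.tendsto_toReal (measure_ne_top P _)).comp hl
  have hl2 : Tendsto (fun n => ∫ ω, Real.exp
      (Dc ν (1 / b n) (B t ω + (ν - 1 / 2) * t) (Adrift B ν t ω)) ∂P) atTop
      (𝓝 (P {ω | Adrift B ν t ω ≤ a}).toReal) := by
    refine hl'.congr fun n => ?_
    exact (cdf_lt hB ν t (b n) ht (ha.trans (hba n))).2
  refine tendsto_nhds_unique hl2 ?_
  refine tendsto_integral_of_dominated_convergence (fun ω =>
    Real.exp (Dc ν (1 / a) (B t ω + (ν - 1 / 2) * t) (Adrift B ν t ω)) *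
      Real.exp (2 / a + 2 * |ν| * Real.log 2)) (fun n => ?_) ?_ (fun n => ?_) ?_
  · exact (cdf_lt hB ν t (b n) ht (ha.trans (hba n))).1.aestronglyMeasurable
  · exact (cdf_lt hB ν t a ht ha).1.mul_const _
  · refine Eventually.of_forall fun ω => ?_
    rw [Real.norm_eq_abs, abs_of_pos (Real.exp_pos _), ← Real.exp_add, Real.exp_le_exp]
    exact Dc_bound ν a (b n) _ _ ha (hba n).le (hb2 n) (Adrift_nonneg B ν t ht ω)
  · refine Eventually.of_forall fun ω => ?_
    refine (Real.continuous_exp.tendsto _).comp ?_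
    have hc : Tendsto (fun n => 1 / b n) atTop (𝓝 (1 / a)) := tendsto_const_nhds.div hblim ha.ne'
    have hp : 1 + 1 / a * Adrift B ν t ω ≠ 0 := by
      have := Adrift_nonneg B ν t ht ω
      positivity
    have hd : Tendsto (fun n => 1 + 1 / b n * Adrift B ν t ω) atTop
        (𝓝 (1 + 1 / a * Adrift B ν t ω)) := (hc.mul_const _).const_add 1
    unfold Dc
    exact ((((hc.const_mul 2).mul_const _).div hd hp).sub (hc.const_mul 2)).sub
      (((hd.log hp).const_mul 2).const_mul ν)

end BM

variable {Ω : Type*} [MeasurableSpace Ω] (P : MeasureTheory.Measure Ω) (B : ℝ → Ω → ℝ)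

theorem cdf_Adrift_eq (hB : IsBrownianMotion P B) (ν t a : ℝ) (ht : 0 < t) (ha : 0 < a) :
    (P {ω | Adrift B ν t ω ≤ a}).toReal
      = a ^ (2 * ν) * Real.exp (-2 / a) *
        ∫ ω, (a + Adrift B ν t ω) ^ (-(2 * ν)) *
              Real.exp (2 * Real.exp (B t ω + (ν - 1 / 2) * t) / (a + Adrift B ν t ω)) ∂P := by
  rw [cdf_le hB ν t a ht ha, ← integral_const_mul]
  refine integral_congr_ae (Filter.Eventually.of_forall fun ω => ?_)
  exact Dc_form ν a _ _ ha (Adrift_nonneg B ν t ht ω)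
end
end

section
/- For every t > 0 and every a > 0, the cumulative distribution function u ↦ P[ A_t ≤ u ] is differentiable at a with derivative (2/a²)·P[ A_t ≤ a ] − (2/a²)·P[ A_t^{(1)} ≤ a ]; that is, the probability density function g_t of A_t satisfies g_t(a) = (2/a²)·( P[A_t ≤ a] − P[A_t^{(1)} ≤ a] ). -/
open MeasureTheory ProbabilityTheory Real Set

noncomputable section

lemma gauss_shift (δ : ℝ) (hδ : 0 < δ) :
    (gaussianReal 0 (Real.toNNReal δ)).withDensity
      (fun x => ENNReal.ofReal (Real.exp (x - δ / 2))) = gaussianReal δ (Real.toNNReal δ) := by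
  have h0 : Real.toNNReal δ ≠ 0 := by simpa using hδ
  rw [gaussianReal_of_var_ne_zero _ h0, gaussianReal_of_var_ne_zero _ h0,
    ← withDensity_mul _ (by fun_prop) (by fun_prop)]
  congr 1
  ext x
  simp only [Pi.mul_apply, gaussianPDF, gaussianPDFReal]
  rw [← ENNReal.ofReal_mul (by positivity), mul_assoc, ← Real.exp_add,
    Real.coe_toNNReal _ hδ.le]
  congr 3
  field_simp
  ring

lemma shift_law {Ω : Type*} [MeasurableSpace Ω] (P : Measure Ω) [IsProbabilityMeasure P]
    (N n : ℕ) (δ : ℝ) (hδ : 0 < δ) (Y : Fin N → Ω → ℝ) (hm : ∀ i, Measurable (Y i))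
    (hi : iIndepFun Y P) (hl : ∀ i, P.map (Y i) = gaussianReal 0 (Real.toNNReal δ)) :
    (P.withDensity (fun ω => ∏ i : Fin N,
        if (i : ℕ) < n then ENNReal.ofReal (Real.exp (Y i ω - δ / 2)) else 1)).map
        (fun ω i => Y i ω)
      = P.map (fun ω i => Y i ω + if (i : ℕ) < n then δ else 0) := by
  set w : Fin N → ℝ → ENNReal := fun i x =>
    if (i : ℕ) < n then ENNReal.ofReal (Real.exp (x - δ / 2)) else 1 with hw
  have hwm : ∀ i, Measurable (w i) := by
    intro i; simp only [hw]; split_ifs <;> fun_prop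
  have hwl : ∀ i, (gaussianReal 0 (Real.toNNReal δ)).withDensity (w i)
      = (gaussianReal 0 (Real.toNNReal δ)).map (· + if (i : ℕ) < n then δ else 0) := by
    intro i
    simp only [hw]
    split_ifs with h
    · rw [gauss_shift δ hδ, gaussianReal_map_add_const, zero_add]
    · simp
  trans Measure.pi (fun i => (gaussianReal 0 (Real.toNNReal δ)).withDensity (w i))
  · have : ∀ i, IsProbabilityMeasure ((gaussianReal 0 (Real.toNNReal δ)).withDensity (w i)) := by
      intro i
      rw [hwl]
      exact Measure.isProbabilityMeasure_map (by fun_prop)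
    symm
    apply Measure.pi_eq
    intro S hS
    have hYm : Measurable (fun ω i => Y i ω) := measurable_pi_iff.2 hm
    rw [Measure.map_apply hYm (MeasurableSet.univ_pi hS),
      withDensity_apply _ (hYm (MeasurableSet.univ_pi hS)),
      ← lintegral_indicator (hYm (MeasurableSet.univ_pi hS))]
    have : ∀ ω, ((fun ω i => Y i ω) ⁻¹' (Set.univ.pi S)).indicator
        (fun ω => ∏ i : Fin N, if (i : ℕ) < n then
          ENNReal.ofReal (Real.exp (Y i ω - δ / 2)) else 1) ω
        = ∏ i : Fin N, ((S i).indicator (w i)) (Y i ω) := by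
      intro ω
      by_cases h : ∀ i, Y i ω ∈ S i
      · rw [indicator_of_mem (by simpa using h)]
        refine Finset.prod_congr rfl fun i _ => ?_
        rw [indicator_of_mem (h i)]
      · rw [indicator_of_notMem (by simpa using h)]
        push Not at h
        obtain ⟨i, hi⟩ := h
        rw [Finset.prod_eq_zero (Finset.mem_univ i)]
        rw [indicator_of_notMem hi]
    simp_rw [this]
    have hg : ∀ i, Measurable ((S i).indicator (w i)) := fun i => (hwm i).indicator (hS i)
    have := lintegral_prod_eq_prod_lintegral_of_indepFun (μ := P) Finset.univ
      (fun i ω => ((S i).indicator (w i)) (Y i ω)) (hi.comp _ hg)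
      (fun i => (hg i).comp (hm i))
    rw [this]
    refine Finset.prod_congr rfl fun i _ => ?_
    rw [withDensity_apply _ (hS i), ← hl i, ← lintegral_indicator (hS i),
      lintegral_map (hg i) (hm i)]
  · simp_rw [hwl]
    have : ∀ i : Fin N, IsProbabilityMeasure ((gaussianReal 0 (Real.toNNReal δ)).map
        (· + if (i : ℕ) < n then δ else 0)) := fun i =>
      Measure.isProbabilityMeasure_map (by fun_prop)
    rw [← Measure.pi_map_pi (fun i => by fun_prop)]
    have hp := (iIndepFun_iff_map_fun_eq_pi_map (fun i => (hm i).aemeasurable)).1 hi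
    simp_rw [hl] at hp
    rw [← hp, Measure.map_map (by fun_prop) (measurable_pi_iff.2 hm)]
    rfl

lemma grid_tendsto (v : ℝ) (hv : 0 < v) (s : ℝ) (hs : 0 ≤ s) :
    Filter.Tendsto (fun n : ℕ => (⌊s / (v / ((n : ℝ) + 1))⌋₊ : ℝ) * (v / ((n : ℝ) + 1)))
      Filter.atTop (nhds s) := by
  have h1 : Filter.Tendsto (fun n : ℕ => s - v / ((n : ℝ) + 1)) Filter.atTop (nhds s) := by
    have : Filter.Tendsto (fun n : ℕ => v / ((n : ℝ) + 1)) Filter.atTop (nhds 0) := by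
      have := (tendsto_one_div_add_atTop_nhds_zero_nat (𝕜 := ℝ)).const_mul v
      simpa [div_eq_mul_inv] using this
    simpa using this.const_sub s
  refine tendsto_of_tendsto_of_tendsto_of_le_of_le h1 tendsto_const_nhds ?_ ?_
  · intro n
    have hd : 0 < v / ((n : ℝ) + 1) := by positivity
    have := Nat.lt_floor_add_one (s / (v / ((n : ℝ) + 1)))
    rw [div_lt_iff₀ hd] at this
    dsimp only
    linarith
  · intro n
    have hd : 0 < v / ((n : ℝ) + 1) := by positivity
    have := Nat.floor_le (show 0 ≤ s / (v / ((n : ℝ) + 1)) by positivity)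
    rw [le_div_iff₀ hd] at this
    exact this

lemma grid_le (δ : ℝ) (hd : 0 < δ) (s : ℝ) (hs : 0 ≤ s) : (⌊s / δ⌋₊ : ℝ) * δ ≤ s := by
  have := Nat.floor_le (show 0 ≤ s / δ by positivity)
  rwa [le_div_iff₀ hd] at this

lemma approx_tendsto (v : ℝ) (hv : 0 < v) (b : ℝ → ℝ) (hb : Continuous b) (r : ℝ) (hr : 0 ≤ r) :
    Filter.Tendsto (fun n : ℕ => ∫ s in (0 : ℝ)..r,
      Real.exp (b ((⌊s / (v / ((n : ℝ) + 1))⌋₊ : ℝ) * (v / ((n : ℝ) + 1))) - s / 2))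
      Filter.atTop (nhds (∫ s in (0 : ℝ)..r, Real.exp (b s - s / 2))) := by
  obtain ⟨K, hK⟩ := (isCompact_Icc (a := (0 : ℝ)) (b := r)).exists_bound_of_continuousOn
    hb.continuousOn
  refine intervalIntegral.tendsto_integral_filter_of_dominated_convergence
    (fun _ => Real.exp K) ?_ ?_ (by simp) ?_
  · refine Filter.Eventually.of_forall fun n => Measurable.aestronglyMeasurable ?_
    have := hb.measurable
    fun_prop
  · refine Filter.Eventually.of_forall fun n => Filter.Eventually.of_forall fun s hs => ?_
    rw [uIoc_of_le hr] at hs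
    rw [Real.norm_eq_abs, abs_of_pos (Real.exp_pos _), Real.exp_le_exp]
    have h1 := grid_le (v / ((n : ℝ) + 1)) (by positivity) s hs.1.le
    have h2 := hK ((⌊s / (v / ((n : ℝ) + 1))⌋₊ : ℝ) * (v / ((n : ℝ) + 1)))
      ⟨by positivity, h1.trans hs.2⟩
    have h3 := (abs_le.1 (Real.norm_eq_abs _ ▸ h2)).2
    linarith [hs.1]
  · refine Filter.Eventually.of_forall fun s hs => ?_
    rw [uIoc_of_le hr] at hs
    have := (hb.tendsto s).comp (grid_tendsto v hv s hs.1.le)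
    exact (Real.continuous_exp.tendsto _).comp (this.sub_const _)

/-- Functional of the increments. -/
def Phi (N : ℕ) (δ r : ℝ) (x : Fin N → ℝ) : ℝ :=
  ∫ s in (0 : ℝ)..r, Real.exp ((∑ i : Fin N, if (i : ℕ) < ⌊s / δ⌋₊ then x i else 0) - s / 2)

lemma Phi_measurable (N : ℕ) (δ r : ℝ) : Measurable (Phi N δ r) := by
  unfold Phi
  simp_rw [intervalIntegral]
  have hm : Measurable (fun p : (Fin N → ℝ) × ℝ =>
      Real.exp ((∑ i : Fin N, if (i : ℕ) < ⌊p.2 / δ⌋₊ then p.1 i else 0) - p.2 / 2)) := by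
    refine Real.measurable_exp.comp (Measurable.sub (Finset.measurable_sum _ fun i _ => ?_)
      (by fun_prop))
    refine Measurable.ite ?_ (by fun_prop) (by fun_prop)
    have : Measurable (fun p : (Fin N → ℝ) × ℝ => ⌊p.2 / δ⌋₊) := by fun_prop
    exact this (measurableSet_Ioi (a := (i : ℕ)))
  refine Measurable.sub ?_ ?_
  · exact (hm.stronglyMeasurable.integral_prod_right
      (ν := volume.restrict (Ioc 0 r))).measurable
  · exact (hm.stronglyMeasurable.integral_prod_right
      (ν := volume.restrict (Ioc r 0))).measurable

lemma incr_sum {N : ℕ} (f : ℕ → ℝ) (k : ℕ) (hk : k ≤ N) :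
    (∑ i : Fin N, if (i : ℕ) < k then f i else 0) = ∑ i ∈ Finset.range k, f i := by
  rw [Fin.sum_univ_eq_sum_range (fun i => if i < k then f i else 0) N, ← Finset.sum_filter]
  congr 1
  ext i
  simp
  omega

lemma shift_sum (k n : ℕ) (δ : ℝ) (hδ : 0 ≤ δ) :
    (∑ i ∈ Finset.range k, if i < n then δ else 0) = min (k * δ) (n * δ) := by
  rw [← Finset.sum_filter]
  have : Finset.filter (fun i => i < n) (Finset.range k) = Finset.range (min k n) := by
    ext i; simp
  rw [this, Finset.sum_const, Finset.card_range, nsmul_eq_mul, Nat.cast_min,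
    min_mul_of_nonneg _ _ hδ]

section main
variable {Ω : Type*} [MeasurableSpace Ω] {P : Measure Ω} {B : ℝ → Ω → ℝ}

/-- discrete Girsanov -/
lemma discrete (hB : IsBrownianMotion P B) (v t : ℝ) (hv : 0 < v) (n : ℕ) :
    ∃ N : ℕ, ∃ Y : Fin N → Ω → ℝ, (∀ i, Measurable (Y i)) ∧
      (P.withDensity (fun ω => ENNReal.ofReal (M B v ω))).map (fun ω i => Y i ω)
      = P.map (fun ω (i : Fin N) => Y i ω + if (i : ℕ) < n + 1 then v / ((n : ℝ) + 1) else 0) ∧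
      (∀ r ω, 0 ≤ r → r ≤ t → Phi N (v / ((n : ℝ) + 1)) r (fun i => Y i ω) =
        ∫ s in (0 : ℝ)..r, Real.exp (B ((⌊s / (v / ((n : ℝ) + 1))⌋₊ : ℝ) * (v / ((n : ℝ) + 1))) ω
          - s / 2)) ∧
      (∀ r ω, 0 ≤ r → r ≤ t → Phi N (v / ((n : ℝ) + 1)) r
          (fun i => Y i ω + if (i : ℕ) < n + 1 then v / ((n : ℝ) + 1) else 0) =
        ∫ s in (0 : ℝ)..r, Real.exp (
          (B ((⌊s / (v / ((n : ℝ) + 1))⌋₊ : ℝ) * (v / ((n : ℝ) + 1))) ω +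
            min ((⌊s / (v / ((n : ℝ) + 1))⌋₊ : ℝ) * (v / ((n : ℝ) + 1))) v)
          - s / 2)) := by
  have := hB.isProbabilityMeasure
  set δ := v / ((n : ℝ) + 1) with hδ
  have hδ0 : 0 < δ := by positivity
  have hnd : ((n + 1 : ℕ) : ℝ) * δ = v := by rw [hδ]; push_cast; field_simp
  set N := max (n + 1) ⌊t / δ⌋₊ with hN
  have htel : ∀ (k : ℕ) ω, ∑ i ∈ Finset.range k, (B (((i + 1 : ℕ) : ℝ) * δ) ω - B ((i : ℝ) * δ) ω)
      = B (k * δ) ω := by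
    intro k ω
    rw [Finset.sum_range_sub (fun i : ℕ => B ((i : ℝ) * δ) ω)]
    simp [hB.start]
  have hfl : ∀ r s, r ≤ t → s ∈ uIoc 0 r → 0 ≤ r → ⌊s / δ⌋₊ ≤ N := by
    intro r s hr hs hr0
    rw [uIoc_of_le hr0] at hs
    refine le_trans (Nat.floor_le_floor ?_) (le_max_right _ _)
    have := hs.2.trans hr
    gcongr
  refine ⟨N, fun i ω => B ((((i : ℕ) + 1 : ℕ) : ℝ) * δ) ω - B (((i : ℕ) : ℝ) * δ) ω,
    fun i => (hB.measurable _).sub (hB.measurable _), ?_, ?_, ?_⟩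
  · rw [← shift_law P N (n + 1) δ hδ0
      (fun i ω => B ((((i : ℕ) + 1 : ℕ) : ℝ) * δ) ω - B (((i : ℕ) : ℝ) * δ) ω)
      (fun i => (hB.measurable _).sub (hB.measurable _))]
    · congr 2
      ext ω
      rw [← Finset.prod_filter, ← ENNReal.ofReal_prod_of_nonneg
        (fun i _ => (Real.exp_pos _).le), ← Real.exp_sum, M, Finset.sum_filter,
        incr_sum (fun i => B (((i + 1 : ℕ) : ℝ) * δ) ω - B ((i : ℝ) * δ) ω - δ / 2) (n + 1)
          (le_max_left _ _), Finset.sum_sub_distrib, htel, hnd]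
      congr 3
      simp only [Finset.sum_const, Finset.card_range, nsmul_eq_mul]
      rw [← hnd]; ring
    · have := hB.indep_increments (fun i : ℕ => (i : ℝ) * δ)
        (fun i j hij => by dsimp only; gcongr) (by simp)
      exact this.precomp (g := fun i : Fin N => (i : ℕ)) Fin.val_injective
    · intro i
      rw [hB.gaussian_increments _ _ (by positivity) (by gcongr; simp)]
      congr 2
      push_cast; ring
  · intro r ω hr0 hr
    refine intervalIntegral.integral_congr_ae (Filter.Eventually.of_forall fun s hs => ?_)
    dsimp only
    rw [incr_sum (fun i => B (((i + 1 : ℕ) : ℝ) * δ) ω - B ((i : ℝ) * δ) ω) _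
      (hfl r s hr hs hr0), htel]
  · intro r ω hr0 hr
    refine intervalIntegral.integral_congr_ae (Filter.Eventually.of_forall fun s hs => ?_)
    dsimp only
    rw [incr_sum (fun i => (B (((i + 1 : ℕ) : ℝ) * δ) ω - B ((i : ℝ) * δ) ω) +
      if i < n + 1 then δ else 0) _
      (hfl r s hr hs hr0), Finset.sum_add_distrib, htel, shift_sum _ _ _ hδ0.le, hnd]

/-- shifted path functional -/
def Ash (B : ℝ → Ω → ℝ) (v r : ℝ) (ω : Ω) : ℝ :=
  ∫ s in (0 : ℝ)..r, Real.exp (B s ω + min s v - s / 2)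

lemma pathint_meas (hB : IsBrownianMotion P B) (g : ℝ → ℝ) (hg : Measurable g) (r : ℝ) :
    Measurable (fun ω => ∫ s in (0 : ℝ)..r, Real.exp (B s ω + g s)) := by
  have hu : Measurable (Function.uncurry B) :=
    measurable_uncurry_of_continuous_of_measurable hB.continuous_paths hB.measurable
  have hm : Measurable (fun p : Ω × ℝ => Real.exp (B p.2 p.1 + g p.2)) :=
    Real.measurable_exp.comp ((hu.comp measurable_swap).add (hg.comp measurable_snd))
  simp_rw [intervalIntegral]
  refine Measurable.sub ?_ ?_
  · exact (hm.stronglyMeasurable.integral_prod_right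
      (ν := volume.restrict (Ioc 0 r))).measurable
  · exact (hm.stronglyMeasurable.integral_prod_right
      (ν := volume.restrict (Ioc r 0))).measurable

lemma A_meas (hB : IsBrownianMotion P B) (r : ℝ) : Measurable (A B r) := by
  simpa [A, sub_eq_add_neg] using! pathint_meas hB (fun s => - (s / 2)) (by fun_prop) r

lemma Ash_meas (hB : IsBrownianMotion P B) (v r : ℝ) : Measurable (Ash B v r) := by
  have := pathint_meas hB (fun s => min s v - s / 2) (by fun_prop) r
  simp_rw [← add_sub_assoc] at this
  exact this

lemma Q_prob (hB : IsBrownianMotion P B) (v : ℝ) (hv : 0 < v) :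
    IsProbabilityMeasure (P.withDensity (fun ω => ENNReal.ofReal (M B v ω))) := by
  have := hB.isProbabilityMeasure
  obtain ⟨N, Y, hY, h, -⟩ := discrete hB v v hv 0
  have h' := congrArg (fun m => m univ) h
  rw [Measure.map_apply (measurable_pi_iff.2 hY) MeasurableSet.univ,
    Measure.map_apply (measurable_pi_iff.2 fun i => (hY i).add_const _) MeasurableSet.univ] at h'
  simp only [preimage_univ] at h'
  exact ⟨by rw [h']; simp⟩

lemma girsanov_law (hB : IsBrownianMotion P B) (v t : ℝ) (hv : 0 < v) (hvt : v ≤ t) :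
    (P.withDensity (fun ω => ENNReal.ofReal (M B v ω))).map (fun ω => (A B v ω, A B t ω))
      = P.map (fun ω => (Ash B v v ω, Ash B v t ω)) := by
  have := hB.isProbabilityMeasure
  have := Q_prob hB v hv
  set Q := P.withDensity (fun ω => ENNReal.ofReal (M B v ω)) with hQ
  have hm1 : Measurable (fun ω => (A B v ω, A B t ω)) := (A_meas hB v).prodMk (A_meas hB t)
  have hm2 : Measurable (fun ω => (Ash B v v ω, Ash B v t ω)) :=
    (Ash_meas hB v v).prodMk (Ash_meas hB v t)
  have := Measure.isProbabilityMeasure_map (μ := Q) hm1.aemeasurable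
  have := Measure.isProbabilityMeasure_map (μ := P) hm2.aemeasurable
  apply ext_of_forall_integral_eq_of_IsFiniteMeasure
  intro f
  rw [integral_map hm1.aemeasurable f.continuous.aestronglyMeasurable,
    integral_map hm2.aemeasurable f.continuous.aestronglyMeasurable]
  choose N Y hY h1 h2 h3 using fun n => discrete hB v t hv n
  have hF : ∀ n, Measurable (fun x : Fin (N n) → ℝ =>
      f (Phi (N n) (v / ((n : ℝ) + 1)) v x, Phi (N n) (v / ((n : ℝ) + 1)) t x)) := fun n =>
    f.continuous.measurable.comp ((Phi_measurable _ _ _).prodMk (Phi_measurable _ _ _))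
  have hYm : ∀ n, Measurable (fun ω i => Y n i ω) := fun n => measurable_pi_iff.2 (hY n)
  have hYm' : ∀ n, Measurable (fun ω i => Y n i ω +
      if (i : ℕ) < n + 1 then v / ((n : ℝ) + 1) else 0) := fun n =>
    measurable_pi_iff.2 fun i => (hY n i).add_const _
  have heq : ∀ n, ∫ ω, f (Phi (N n) (v / ((n : ℝ) + 1)) v (fun i => Y n i ω),
        Phi (N n) (v / ((n : ℝ) + 1)) t (fun i => Y n i ω)) ∂Q =
      ∫ ω, f (Phi (N n) (v / ((n : ℝ) + 1)) v (fun i => Y n i ω +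
      if (i : ℕ) < n + 1 then v / ((n : ℝ) + 1) else 0),
        Phi (N n) (v / ((n : ℝ) + 1)) t (fun i => Y n i ω +
      if (i : ℕ) < n + 1 then v / ((n : ℝ) + 1) else 0)) ∂P := by
    intro n
    have e1 := integral_map (μ := Q) (hYm n).aemeasurable (hF n).aestronglyMeasurable
    have e2 := integral_map (μ := P) (hYm' n).aemeasurable (hF n).aestronglyMeasurable
    rw [← e1, ← e2, h1 n]
  have t1 : Filter.Tendsto (fun n => ∫ ω, f (Phi (N n) (v / ((n : ℝ) + 1)) v (fun i => Y n i ω),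
        Phi (N n) (v / ((n : ℝ) + 1)) t (fun i => Y n i ω)) ∂Q) Filter.atTop
        (nhds (∫ ω, f (A B v ω, A B t ω) ∂Q)) := by
    refine tendsto_integral_of_dominated_convergence (fun _ => ‖f‖)
      (fun n => ((hF n).comp (hYm n)).aestronglyMeasurable) (integrable_const _)
      (fun n => Filter.Eventually.of_forall fun ω => f.norm_coe_le_norm _)
      (Filter.Eventually.of_forall fun ω => ?_)
    refine (f.continuous.tendsto _).comp (Filter.Tendsto.prodMk_nhds ?_ ?_)
    · simp_rw [fun n => h2 n v ω hv.le hvt]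
      exact approx_tendsto v hv (fun s => B s ω) (hB.continuous_paths ω) v hv.le
    · simp_rw [fun n => h2 n t ω (hv.le.trans hvt) le_rfl]
      exact approx_tendsto v hv (fun s => B s ω) (hB.continuous_paths ω) t (hv.le.trans hvt)
  have t2 : Filter.Tendsto (fun n => ∫ ω, f (Phi (N n) (v / ((n : ℝ) + 1)) v (fun i => Y n i ω +
      if (i : ℕ) < n + 1 then v / ((n : ℝ) + 1) else 0),
        Phi (N n) (v / ((n : ℝ) + 1)) t (fun i => Y n i ω +
      if (i : ℕ) < n + 1 then v / ((n : ℝ) + 1) else 0)) ∂P) Filter.atTop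
        (nhds (∫ ω, f (Ash B v v ω, Ash B v t ω) ∂P)) := by
    refine tendsto_integral_of_dominated_convergence (fun _ => ‖f‖)
      (fun n => ((hF n).comp (hYm' n)).aestronglyMeasurable) (integrable_const _)
      (fun n => Filter.Eventually.of_forall fun ω => f.norm_coe_le_norm _)
      (Filter.Eventually.of_forall fun ω => ?_)
    have hc : Continuous (fun s => B s ω + min s v) :=
      (hB.continuous_paths ω).add (by fun_prop)
    refine (f.continuous.tendsto _).comp (Filter.Tendsto.prodMk_nhds ?_ ?_)
    · simp_rw [fun n => h3 n v ω hv.le hvt]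
      exact approx_tendsto v hv (fun s => B s ω + min s v) hc v hv.le
    · simp_rw [fun n => h3 n t ω (hv.le.trans hvt) le_rfl]
      exact approx_tendsto v hv (fun s => B s ω + min s v) hc t (hv.le.trans hvt)
  simp_rw [heq] at t1
  exact tendsto_nhds_unique t1 t2

lemma M_meas (hB : IsBrownianMotion P B) (v : ℝ) : Measurable (M B v) := by
  have := hB.measurable v
  unfold M
  fun_prop

lemma girsanov (hB : IsBrownianMotion P B) (v t : ℝ) (hv : 0 < v) (hvt : v ≤ t)
    (f : ℝ × ℝ → ENNReal) (hf : Measurable f) :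
    ∫⁻ ω, f (Ash B v v ω, Ash B v t ω) ∂P =
      ∫⁻ ω, ENNReal.ofReal (M B v ω) * f (A B v ω, A B t ω) ∂P := by
  have hm1 : Measurable (fun ω => (A B v ω, A B t ω)) := (A_meas hB v).prodMk (A_meas hB t)
  have hm2 : Measurable (fun ω => (Ash B v v ω, Ash B v t ω)) :=
    (Ash_meas hB v v).prodMk (Ash_meas hB v t)
  rw [← lintegral_map (f := f) hf hm2, ← girsanov_law hB v t hv hvt, lintegral_map hf hm1,
    lintegral_withDensity_eq_lintegral_mul _ (M_meas hB v).ennreal_ofReal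
      (g := fun ω => f (A B v ω, A B t ω)) (hf.comp hm1)]
  rfl

/-! Pathwise part -/

lemma cont_m (hB : IsBrownianMotion P B) (ω : Ω) :
    Continuous (fun s => Real.exp (B s ω - s / 2)) := by
  have := hB.continuous_paths ω
  fun_prop

lemma A_hasDerivAt (hB : IsBrownianMotion P B) (ω : Ω) (v : ℝ) :
    HasDerivAt (fun v => A B v ω) (M B v ω) v :=
  intervalIntegral.integral_hasDerivAt_right ((cont_m hB ω).intervalIntegrable _ _)
    ((cont_m hB ω).stronglyMeasurableAtFilter _ _) (cont_m hB ω).continuousAt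

lemma A_cont (hB : IsBrownianMotion P B) (ω : Ω) : Continuous (fun v => A B v ω) :=
  continuous_iff_continuousAt.2 fun v => (A_hasDerivAt hB ω v).continuousAt

lemma A_strictMono (hB : IsBrownianMotion P B) (ω : Ω) : StrictMono (fun v => A B v ω) :=
  strictMono_of_deriv_pos fun v => by
    rw [(A_hasDerivAt hB ω v).deriv]; exact Real.exp_pos _

lemma A_zero (ω : Ω) : A B 0 ω = 0 := by simp [A]

/-- `∫_0^v e^s M_s ds`. -/
def L (B : ℝ → Ω → ℝ) (v : ℝ) (ω : Ω) : ℝ := ∫ s in (0 : ℝ)..v, Real.exp (B s ω + s / 2)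

lemma cont_l (hB : IsBrownianMotion P B) (ω : Ω) :
    Continuous (fun s => Real.exp (B s ω + s / 2)) := by
  have := hB.continuous_paths ω
  fun_prop

lemma L_hasDerivAt (hB : IsBrownianMotion P B) (ω : Ω) (v : ℝ) :
    HasDerivAt (fun v => L B v ω) (Real.exp (B v ω + v / 2)) v :=
  intervalIntegral.integral_hasDerivAt_right ((cont_l hB ω).intervalIntegrable _ _)
    ((cont_l hB ω).stronglyMeasurableAtFilter _ _) (cont_l hB ω).continuousAt

lemma L_cont (hB : IsBrownianMotion P B) (ω : Ω) : Continuous (fun v => L B v ω) :=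
  continuous_iff_continuousAt.2 fun v => (L_hasDerivAt hB ω v).continuousAt

lemma L_meas (hB : IsBrownianMotion P B) (r : ℝ) : Measurable (L B r) :=
  pathint_meas hB (fun s => s / 2) (by fun_prop) r

lemma L_eq_Adrift (t : ℝ) (ω : Ω) : Adrift B 1 t ω = L B t ω := by
  unfold Adrift L
  congr 1
  ext s
  congr 2
  ring

/-- `R v = ∫_0^t exp (B_s + min s v - s / 2) ds` for `0 ≤ v ≤ t`. -/
def R (B : ℝ → Ω → ℝ) (t v : ℝ) (ω : Ω) : ℝ :=
  L B v ω + Real.exp v * (A B t ω - A B v ω)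

lemma R_hasDerivAt (hB : IsBrownianMotion P B) (ω : Ω) (t v : ℝ) :
    HasDerivAt (fun v => R B t v ω) (Real.exp v * (A B t ω - A B v ω)) v := by
  have h := (L_hasDerivAt hB ω v).add ((Real.hasDerivAt_exp v).mul
    ((A_hasDerivAt hB ω v).const_sub (A B t ω)))
  convert! h using 1
  have : Real.exp (B v ω + v / 2) = Real.exp v * M B v ω := by
    rw [M, ← Real.exp_add]; congr 1; ring
  rw [this]; ring

lemma R_meas (hB : IsBrownianMotion P B) (t v : ℝ) : Measurable (R B t v) :=
  (L_meas hB v).add (((A_meas hB t).sub (A_meas hB v)).const_mul _)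

lemma Ash_vv (v : ℝ) (hv : 0 ≤ v) (ω : Ω) : Ash B v v ω = L B v ω := by
  refine intervalIntegral.integral_congr fun s hs => ?_
  rw [uIcc_of_le hv] at hs
  rw [min_eq_left hs.2]
  congr 1; ring

lemma Ash_vt (hB : IsBrownianMotion P B) (v t : ℝ) (hv : 0 ≤ v) (hvt : v ≤ t) (ω : Ω) :
    Ash B v t ω = R B t v ω := by
  have hc : Continuous (fun s => Real.exp (B s ω + min s v - s / 2)) := by
    have := hB.continuous_paths ω
    fun_prop
  rw [R, ← Ash_vv v hv, Ash, Ash, A, A, intervalIntegral.integral_interval_sub_left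
    ((cont_m hB ω).intervalIntegrable _ _) ((cont_m hB ω).intervalIntegrable _ _),
    ← intervalIntegral.integral_add_adjacent_intervals (b := v) (hc.intervalIntegrable _ _)
      (hc.intervalIntegrable _ _), ← intervalIntegral.integral_const_mul]
  congr 1
  refine intervalIntegral.integral_congr fun s hs => ?_
  rw [uIcc_of_le hvt] at hs
  rw [min_eq_right hs.1, ← Real.exp_add]
  congr 1; ring

lemma R_strictMonoOn (hB : IsBrownianMotion P B) (ω : Ω) (t : ℝ) :
    StrictMonoOn (fun v => R B t v ω) (Icc 0 t) := by
  refine strictMonoOn_of_deriv_pos (convex_Icc _ _)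
    (fun v _ => (R_hasDerivAt hB ω t v).continuousAt.continuousWithinAt) ?_
  intro v hv
  rw [interior_Icc] at hv
  rw [(R_hasDerivAt hB ω t v).deriv]
  have := A_strictMono hB ω hv.2
  exact mul_pos (Real.exp_pos _) (sub_pos.2 this)

lemma R_zero (t : ℝ) (ω : Ω) : R B t 0 ω = A B t ω := by simp [R, L, A]

lemma R_t (t : ℝ) (ω : Ω) : R B t t ω = Adrift B 1 t ω := by simp [R, L_eq_Adrift]

lemma A_le_Adrift (hB : IsBrownianMotion P B) (ω : Ω) (t : ℝ) (ht : 0 < t) :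
    A B t ω ≤ Adrift B 1 t ω := by
  have := (R_strictMonoOn hB ω t).monotoneOn (left_mem_Icc.2 ht.le) (right_mem_Icc.2 ht.le) ht.le
  simpa only [R_zero, R_t] using this

lemma change_var (hB : IsBrownianMotion P B) (ω : Ω) (t : ℝ) (ht : 0 < t) (φ : ℝ → ENNReal) :
    ∫⁻ z in Ico (A B t ω) (Adrift B 1 t ω), φ z =
      ∫⁻ v in Ioc 0 t, ENNReal.ofReal (Real.exp v * (A B t ω - A B v ω)) * φ (R B t v ω) := by
  have himg : (fun v => R B t v ω) '' Icc 0 t = Icc (A B t ω) (Adrift B 1 t ω) := by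
    rw [← R_zero, ← R_t]
    apply Subset.antisymm
    · rintro _ ⟨v, hv, rfl⟩
      have hm := (R_strictMonoOn hB ω t).monotoneOn
      exact ⟨hm (left_mem_Icc.2 ht.le) hv hv.1, hm hv (right_mem_Icc.2 ht.le) hv.2⟩
    · exact intermediate_value_Icc ht.le
        (fun v _ => (R_hasDerivAt hB ω t v).continuousAt.continuousWithinAt)
  rw [setLIntegral_congr Ico_ae_eq_Icc, ← himg, lintegral_image_eq_lintegral_abs_deriv_mul
    measurableSet_Icc (fun v _ => (R_hasDerivAt hB ω t v).hasDerivWithinAt)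
    (R_strictMonoOn hB ω t).injOn, setLIntegral_congr Ioc_ae_eq_Icc]
  refine setLIntegral_congr_fun measurableSet_Icc fun v hv => ?_
  rw [abs_of_nonneg]
  have := (A_strictMono hB ω).monotone hv.2
  exact mul_nonneg (Real.exp_pos _).le (sub_nonneg.2 this)

lemma sq_int (hB : IsBrownianMotion P B) (ω : Ω) (t : ℝ) (ht : 0 < t) :
    ∫⁻ v in Ioc 0 t, ENNReal.ofReal (M B v ω) * ENNReal.ofReal (A B t ω - A B v ω)
      = ENNReal.ofReal (A B t ω ^ 2 / 2) := by
  have hc : Continuous (fun v => M B v ω * (A B t ω - A B v ω)) :=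
    (cont_m hB ω).mul (continuous_const.sub (A_cont hB ω))
  have h1 : ∫ v in (0 : ℝ)..t, M B v ω * (A B t ω - A B v ω) = A B t ω ^ 2 / 2 := by
    rw [intervalIntegral.integral_eq_sub_of_hasDerivAt
      (f := fun v => - (A B t ω - A B v ω) ^ 2 / 2) _ (hc.intervalIntegrable _ _)]
    · simp [A_zero]; ring
    · intro v _
      have h := ((((A_hasDerivAt hB ω v).const_sub (A B t ω)).pow 2).neg).div_const 2
      convert! h using 1
      simp; ring
  rw [← h1, intervalIntegral.integral_of_le ht.le, ofReal_integral_eq_lintegral_ofReal]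
  · refine lintegral_congr fun v => ?_
    rw [ENNReal.ofReal_mul (show 0 ≤ M B v ω from (Real.exp_pos _).le)]
  · exact (hc.intervalIntegrable 0 t).1
  · refine (ae_restrict_iff' measurableSet_Ioc).2 (Filter.Eventually.of_forall fun v hv => ?_)
    have := (A_strictMono hB ω).monotone hv.2
    exact mul_nonneg (Real.exp_pos _).le (sub_nonneg.2 this)

lemma key (hB : IsBrownianMotion P B) (t : ℝ) (ht : 0 < t) (φ : ℝ → ENNReal)
    (hφ : Measurable φ) :
    ∫⁻ ω, φ (A B t ω) * ENNReal.ofReal (A B t ω ^ 2 / 2) ∂P =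
      ∫⁻ z, φ z * P {ω | A B t ω ≤ z ∧ z < Adrift B 1 t ω} := by
  have := hB.isProbabilityMeasure
  have hA2 : Measurable (fun p : Ω × ℝ => A B p.2 p.1) :=
    (measurable_uncurry_of_continuous_of_measurable (A_cont hB) (A_meas hB)).comp measurable_swap
  have hL2 : Measurable (fun p : Ω × ℝ => L B p.2 p.1) :=
    (measurable_uncurry_of_continuous_of_measurable (L_cont hB) (L_meas hB)).comp measurable_swap
  have hM2 : Measurable (fun p : Ω × ℝ => M B p.2 p.1) :=
    (measurable_uncurry_of_continuous_of_measurable (cont_m hB) (M_meas hB)).comp measurable_swap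
  have hAt : Measurable (fun p : Ω × ℝ => A B t p.1) := (A_meas hB t).comp measurable_fst
  have hDt : Measurable (fun p : Ω × ℝ => Adrift B 1 t p.1) := by
    simp_rw [L_eq_Adrift]
    exact (L_meas hB t).comp measurable_fst
  have hR2 : Measurable (fun p : Ω × ℝ => R B t p.2 p.1) :=
    hL2.add ((Real.measurable_exp.comp measurable_snd).mul (hAt.sub hA2))
  symm
  calc ∫⁻ z, φ z * P {ω | A B t ω ≤ z ∧ z < Adrift B 1 t ω}
      = ∫⁻ z, ∫⁻ ω, (Ico (A B t ω) (Adrift B 1 t ω)).indicator φ z ∂P := by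
        refine lintegral_congr fun z => ?_
        have hs : MeasurableSet {ω | A B t ω ≤ z ∧ z < Adrift B 1 t ω} := by
          simp_rw [L_eq_Adrift]
          exact (measurableSet_le (A_meas hB t) measurable_const).inter
            (measurableSet_lt measurable_const (L_meas hB t))
        rw [← lintegral_indicator_const hs]
        refine lintegral_congr fun ω => ?_
        simp [indicator_apply]
    _ = ∫⁻ ω, (∫⁻ z, (Ico (A B t ω) (Adrift B 1 t ω)).indicator φ z) ∂P := by
        refine lintegral_lintegral_swap (Measurable.aemeasurable ?_)
        have hs : MeasurableSet {p : ℝ × Ω | A B t p.2 ≤ p.1 ∧ p.1 < Adrift B 1 t p.2} :=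
          (measurableSet_le (hAt.comp measurable_swap) measurable_fst).inter
            (measurableSet_lt measurable_fst (hDt.comp measurable_swap))
        convert! (hφ.comp measurable_fst).indicator hs using 1
    _ = ∫⁻ ω, (∫⁻ v in Ioc 0 t,
          ENNReal.ofReal (Real.exp v * (A B t ω - A B v ω)) * φ (R B t v ω)) ∂P := by
        refine lintegral_congr fun ω => ?_
        rw [lintegral_indicator measurableSet_Ico, change_var hB ω t ht]
    _ = ∫⁻ v in Ioc 0 t, ∫⁻ ω,
          ENNReal.ofReal (Real.exp v * (A B t ω - A B v ω)) * φ (R B t v ω) ∂P := by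
        refine lintegral_lintegral_swap (Measurable.aemeasurable ?_)
        exact (((Real.measurable_exp.comp measurable_snd).mul (hAt.sub hA2)).ennreal_ofReal).mul
          (hφ.comp hR2)
    _ = ∫⁻ v in Ioc 0 t, ∫⁻ ω,
          ENNReal.ofReal (M B v ω) * (ENNReal.ofReal (A B t ω - A B v ω) * φ (A B t ω)) ∂P := by
        refine setLIntegral_congr_fun measurableSet_Ioc fun v hv => ?_
        have h := girsanov hB v t hv.1 hv.2 (fun p => ENNReal.ofReal (p.2 - p.1) * φ p.2)
          (by fun_prop)
        dsimp only at h ⊢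
        rw [← h]
        refine lintegral_congr fun ω => ?_
        rw [Ash_vt hB v t hv.1.le hv.2, Ash_vv v hv.1.le]
        congr 2
        rw [R]; ring
    _ = ∫⁻ ω, (∫⁻ v in Ioc 0 t,
          ENNReal.ofReal (M B v ω) * (ENNReal.ofReal (A B t ω - A B v ω) * φ (A B t ω))) ∂P := by
        refine (lintegral_lintegral_swap (Measurable.aemeasurable ?_)).symm
        exact hM2.ennreal_ofReal.mul ((hAt.sub hA2).ennreal_ofReal.mul (hφ.comp hAt))
    _ = ∫⁻ ω, φ (A B t ω) * ENNReal.ofReal (A B t ω ^ 2 / 2) ∂P := by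
        refine lintegral_congr fun ω => ?_
        rw [← sq_int hB ω t ht, mul_comm (φ _), ← lintegral_mul_const]
        · simp_rw [mul_assoc]
        · exact ((cont_m hB ω).measurable.ennreal_ofReal).mul
            ((A_cont hB ω).measurable.const_sub _).ennreal_ofReal

lemma law_A (hB : IsBrownianMotion P B) (t : ℝ) (ht : 0 < t) (S : Set ℝ) (hS : MeasurableSet S)
    (hS0 : S ⊆ Ioi 0) :
    P {ω | A B t ω ∈ S} =
      ∫⁻ z in S, ENNReal.ofReal (2 / z ^ 2) * P {ω | A B t ω ≤ z ∧ z < Adrift B 1 t ω} := by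
  have h := key hB t ht (S.indicator fun z => ENNReal.ofReal (2 / z ^ 2))
    (Measurable.indicator (by fun_prop) hS)
  rw [← lintegral_indicator hS]
  rw [show P {ω | A B t ω ∈ S} = ∫⁻ ω, {ω | A B t ω ∈ S}.indicator 1 ω ∂P from
    (lintegral_indicator_one (A_meas hB t hS)).symm]
  convert h using 1
  · refine lintegral_congr fun ω => ?_
    by_cases hω : A B t ω ∈ S
    · have h0 : 0 < A B t ω := hS0 hω
      rw [indicator_of_mem (by exact hω), indicator_of_mem hω,
        ← ENNReal.ofReal_mul (by positivity)]
      have : 2 / A B t ω ^ 2 * (A B t ω ^ 2 / 2) = 1 := by field_simp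
      rw [this]; simp
    · rw [indicator_of_notMem (by exact hω), indicator_of_notMem hω, zero_mul]
  · refine lintegral_congr fun z => ?_
    by_cases hz : z ∈ S <;> simp [hz]

lemma no_atom_A (hB : IsBrownianMotion P B) (t : ℝ) (ht : 0 < t) (a : ℝ) (ha : 0 < a) :
    ∀ᵐ ω ∂P, A B t ω ≠ a := by
  have h := law_A hB t ht {a} (measurableSet_singleton a) (by simpa using ha)
  rw [setLIntegral_measure_zero _ _ (by simp)] at h
  rw [ae_iff]
  simpa using h

lemma no_atom_Adrift (hB : IsBrownianMotion P B) (t : ℝ) (ht : 0 < t) (a : ℝ) (ha : 0 < a) :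
    ∀ᵐ ω ∂P, Adrift B 1 t ω ≠ a := by
  have h := girsanov hB t t ht le_rfl (fun p => ({a} : Set ℝ).indicator 1 p.2)
    ((measurable_one.indicator (measurableSet_singleton a)).comp measurable_snd)
  have h2 : ∫⁻ ω, ENNReal.ofReal (M B t ω) * ({a} : Set ℝ).indicator 1 (A B t ω) ∂P = 0 := by
    rw [← lintegral_zero (μ := P)]
    refine lintegral_congr_ae ?_
    filter_upwards [no_atom_A hB t ht a ha] with ω hω
    rw [indicator_of_notMem (by simpa using hω), mul_zero]
  have hm : Measurable (Adrift B 1 t) := by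
    have : Adrift B 1 t = L B t := funext fun ω => L_eq_Adrift t ω
    rw [this]; exact L_meas hB t
  rw [h2] at h
  simp_rw [Ash_vv t ht.le, ← L_eq_Adrift] at h
  rw [lintegral_eq_zero_iff (f := fun ω => ({a} : Set ℝ).indicator 1 (Adrift B 1 t ω)) ((measurable_one.indicator (measurableSet_singleton a)).comp hm)] at h
  filter_upwards [h] with ω hω hc
  simp [hc] at hω

lemma cdf_cont [IsProbabilityMeasure P] (X : Ω → ℝ) (hX : Measurable X) (a : ℝ)
    (ha : ∀ᵐ ω ∂P, X ω ≠ a) : ContinuousAt (fun z => (P {ω | X ω ≤ z}).toReal) a := by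
  have e : ∀ z, (P {ω | X ω ≤ z}).toReal = ∫ ω, {ω | X ω ≤ z}.indicator (1 : Ω → ℝ) ω ∂P := by
    intro z
    rw [integral_indicator_one (measurableSet_le hX measurable_const)]
    rfl
  simp_rw [e]
  refine tendsto_integral_filter_of_dominated_convergence (fun _ => (1 : ℝ)) ?_ ?_
    (integrable_const _) ?_
  · exact Filter.Eventually.of_forall fun z =>
      (measurable_one.indicator (measurableSet_le hX measurable_const)).aestronglyMeasurable
  · refine Filter.Eventually.of_forall fun z => Filter.Eventually.of_forall fun ω => ?_
    by_cases h : X ω ≤ z <;> simp [indicator_apply, h]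
  · filter_upwards [ha] with ω hω
    refine tendsto_const_nhds.congr' ?_
    rcases lt_or_gt_of_ne hω with h | h
    · filter_upwards [lt_mem_nhds h] with z hz
      simp [indicator_apply, h.le, (show X ω < z from hz).le]
    · filter_upwards [gt_mem_nhds h] with z hz
      simp [indicator_apply, not_le.2 h, not_le.2 (show z < X ω from hz)]

end main

variable {Ω : Type*} [MeasurableSpace Ω] (P : MeasureTheory.Measure Ω) (B : ℝ → Ω → ℝ)

theorem density_A (hB : IsBrownianMotion P B) (t a : ℝ) (ht : 0 < t) (ha : 0 < a) :
    HasDerivAt (fun u => (P {ω | A B t ω ≤ u}).toReal)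
      (2 / a ^ 2 * (P {ω | A B t ω ≤ a}).toReal
        - 2 / a ^ 2 * (P {ω | Adrift B 1 t ω ≤ a}).toReal) a := by
  have := hB.isProbabilityMeasure
  have hAm := A_meas hB t
  have hDm : Measurable (Adrift B 1 t) := by
    have : Adrift B 1 t = L B t := funext fun ω => L_eq_Adrift t ω
    rw [this]; exact L_meas hB t
  set F : ℝ → ℝ := fun u => (P {ω | A B t ω ≤ u}).toReal with hF
  set G : ℝ → ℝ := fun u => (P {ω | Adrift B 1 t ω ≤ u}).toReal with hG
  have hFc : ∀ z, 0 < z → ContinuousAt F z := fun z hz =>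
    cdf_cont _ hAm z (no_atom_A hB t ht z hz)
  have hGc : ∀ z, 0 < z → ContinuousAt G z := fun z hz =>
    cdf_cont _ hDm z (no_atom_Adrift hB t ht z hz)
  have hsub : ∀ z, {ω | Adrift B 1 t ω ≤ z} ⊆ {ω | A B t ω ≤ z} := fun z ω hω =>
    (A_le_Adrift hB ω t ht).trans hω
  have hGF : ∀ z, G z ≤ F z := fun z => measureReal_mono (hsub z)
  have hH : ∀ z, P {ω | A B t ω ≤ z ∧ z < Adrift B 1 t ω} = ENNReal.ofReal (F z - G z) := by
    intro z
    have : {ω | A B t ω ≤ z ∧ z < Adrift B 1 t ω}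
        = {ω | A B t ω ≤ z} \ {ω | Adrift B 1 t ω ≤ z} := by
      ext ω; simp
    rw [this, ← ofReal_measureReal (μ := P), measureReal_sdiff (hsub z)
      (measurableSet_le hDm measurable_const)]
    rfl
  set h : ℝ → ℝ := fun z => 2 / z ^ 2 * (F z - G z) with hh
  have hc : ∀ z, 0 < z → ContinuousAt h z := fun z hz =>
    (continuousAt_const.div (continuousAt_id.pow 2) (by simpa using hz.ne')).mul
      ((hFc z hz).sub (hGc z hz))
  have hcon : ContinuousOn h (Ioi 0) := fun z hz => (hc z hz).continuousWithinAt
  have hIntv : ∀ y, 0 < y → IntervalIntegrable h volume (a / 2) y := fun y hy =>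
    (hcon.mono (by
      intro z hz
      exact lt_of_lt_of_le (lt_min (by positivity) hy) hz.1)).intervalIntegrable
  have hform : ∀ y, a / 2 ≤ y → F y = F (a / 2) + ∫ z in (a / 2)..y, h z := by
    intro y hy
    have hl := law_A hB t ht (Ioc (a / 2) y) measurableSet_Ioc
      (fun z hz => lt_trans (by positivity) hz.1)
    simp_rw [hH] at hl
    have e1 : {ω | A B t ω ∈ Ioc (a / 2) y} = {ω | A B t ω ≤ y} \ {ω | A B t ω ≤ a / 2} := by
      ext ω; simp [and_comm]
    have e2 : P {ω | A B t ω ∈ Ioc (a / 2) y} = ENNReal.ofReal (F y - F (a / 2)) := by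
      rw [e1, ← ofReal_measureReal (μ := P), measureReal_sdiff
        (show {ω | A B t ω ≤ a / 2} ⊆ {ω | A B t ω ≤ y} from fun ω hω => le_trans hω hy)
        (measurableSet_le hAm measurable_const)]
      rfl
    have hmono : F (a / 2) ≤ F y := measureReal_mono (fun ω hω => le_trans hω hy)
    have hi := (hIntv y (by linarith)).1
    have hnn : ∀ z, 0 ≤ h z := fun z => mul_nonneg (by positivity) (sub_nonneg.2 (hGF z))
    have e3 : ∫⁻ z in Ioc (a / 2) y, ENNReal.ofReal (2 / z ^ 2) * ENNReal.ofReal (F z - G z)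
        = ENNReal.ofReal (∫ z in (a / 2)..y, h z) := by
      rw [intervalIntegral.integral_of_le hy, ofReal_integral_eq_lintegral_ofReal hi
        (Filter.Eventually.of_forall hnn)]
      refine lintegral_congr fun z => ?_
      rw [← ENNReal.ofReal_mul (by positivity)]
    rw [e2, e3, ENNReal.ofReal_eq_ofReal_iff (sub_nonneg.2 hmono)
      (intervalIntegral.integral_nonneg_of_forall hy hnn)] at hl
    linarith
  have hd : HasDerivAt (fun y => F (a / 2) + ∫ z in (a / 2)..y, h z) (h a) a :=
    (intervalIntegral.integral_hasDerivAt_right (hIntv a ha)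
      (hcon.stronglyMeasurableAtFilter isOpen_Ioi a ha) (hc a ha)).const_add _
  have hd2 : HasDerivAt F (h a) a := by
    refine hd.congr_of_eventuallyEq ?_
    filter_upwards [lt_mem_nhds (show a / 2 < a by linarith)] with y hy
    exact hform y (le_of_lt hy)
  convert hd2 using 1
  simp only [hh, hF, hG]
  ring
end
end
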